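/- Set D = ln κ / ln(κ/a) and ν = ln(κ/a). For Λ > 0 let N(Λ) denote the number of eigenvalues in (0, Λ] of the Dirichlet problem y(0) = y(1) = 0 for the equation −y'' − λρy = 0 with weight ρ the distributional derivative of the Cantor-type self-similar function P with parameters κ, a, b; assume N(Λ) is finite for every Λ > 0. Suppose s : ℝ → ℝ is a continuous ν-periodic function such that N(Λ) = Λ^D·(s(ln Λ) + o(1)) as Λ → +∞. Then there exists a nondecreasing function σ : [0, ν] → ℝ whose Lebesgue–Stieltjes measure is mutually singular with Lebesgue measure (a purely singular nondecreasing function), such that s(t) = e^{−Dt}·σ(t) for all t ∈ [0, ν]. -/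

import Mathlib

open MeasureTheory

/-- A continuous function `f : [0,1] → ℝ` is a *self-similar function of Cantor type*
with parameters `κ`, `a`, `b` if `f 0 = 0`, `f 1 = 1`, `f` is constant on each interval
`(α_{2k-1}, α_{2k})` for `k ∈ {1, …, κ-1}` (where `α_{2k} = k(a+b)`, `α_{2k+1} = α_{2k} + a`),
and for each `k ∈ {0, …, κ-1}` the function `x ↦ κ·f(α_{2k} + a·x)` differs from `f`
by an additive constant. -/
def CantorType (κ : ℕ) (a b : ℝ) (f : ℝ → ℝ) : Prop :=
  ContinuousOn f (Set.Icc 0 1) ∧ f 0 = 0 ∧ f 1 = 1 ∧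
  (∀ k : ℕ, 1 ≤ k → k ≤ κ - 1 →
    ∃ c : ℝ, ∀ x ∈ Set.Ioo (((k : ℝ) - 1) * (a + b) + a) ((k : ℝ) * (a + b)), f x = c) ∧
  (∀ k : ℕ, k ≤ κ - 1 → ∃ c : ℝ, ∀ x ∈ Set.Icc (0 : ℝ) 1,
    (κ : ℝ) * f ((k : ℝ) * (a + b) + a * x) = f x + c)

/-- `lam` is an eigenvalue of the Dirichlet problem `-y'' - λ ρ y = 0`, `y(0) = y(1) = 0`,
where `ρ` is the distributional derivative of the function whose Lebesgue–Stieltjes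
measure is `μ`. -/
def IsDirichletEigen (μ : Measure ℝ) (lam : ℝ) : Prop :=
  ∃ y g : ℝ → ℝ, ContinuousOn y (Set.Icc 0 1) ∧ ContinuousOn g (Set.Icc 0 1) ∧
    (∃ x ∈ Set.Icc (0 : ℝ) 1, y x ≠ 0) ∧
    (∀ x ∈ Set.Icc (0 : ℝ) 1, y x = y 0 + ∫ t in (0 : ℝ)..x, g t) ∧
    (∀ x ∈ Set.Icc (0 : ℝ) 1, g x = g 0 - lam * ∫ t in Set.Icc (0 : ℝ) x, y t ∂μ) ∧
    y 0 = 0 ∧ y 1 = 0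

set_option linter.unusedSectionVars false
set_option linter.unusedVariables false

namespace Cant
open Set

/-- Solutions of the integrated system. -/
structure Sol (μ : Measure ℝ) (l : ℝ) (y g : ℝ → ℝ) : Prop where
  cy : Continuous y
  cg : Continuous g
  hy : ∀ x ∈ Icc (0:ℝ) 1, y x = y 0 + ∫ t in (0:ℝ)..x, g t
  hg : ∀ x ∈ Icc (0:ℝ) 1, g x = g 0 - l * ∫ t in (0:ℝ)..x, y t ∂μ

/-- double integral -/
noncomputable def J (μ : Measure ℝ) (y : ℝ → ℝ) (x : ℝ) : ℝ :=
  ∫ t in (0:ℝ)..x, ∫ s in (0:ℝ)..t, y s ∂μ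

section
variable {μ : Measure ℝ} [IsProbabilityMeasure μ] [NullSingletonClass μ]

lemma Q_cont {y : ℝ → ℝ} (hy : Continuous y) : Continuous fun x => ∫ t in (0:ℝ)..x, y t ∂μ :=
  intervalIntegral.continuous_primitive (fun _ _ => hy.intervalIntegrable _ _) 0

lemma J_cont {y : ℝ → ℝ} (hy : Continuous y) : Continuous (J μ y) :=
  intervalIntegral.continuous_primitive (fun _ _ => (Q_cont hy).intervalIntegrable _ _) 0

lemma Q_bound {y : ℝ → ℝ} {t M : ℝ} (ht : 0 ≤ t) (hM : 0 ≤ M)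
    (h : ∀ s ∈ Icc (0:ℝ) t, |y s| ≤ M) : |∫ s in (0:ℝ)..t, y s ∂μ| ≤ M := by
  rw [intervalIntegral.integral_of_le ht]
  have := norm_setIntegral_le_of_norm_le_const (μ := μ) (s := Ioc 0 t) (C := M) (f := y)
    (measure_lt_top _ _) (fun x hx => h x ⟨hx.1.le, hx.2⟩)
  rw [Real.norm_eq_abs] at this
  refine this.trans ?_
  have h1 : μ.real (Ioc 0 t) ≤ 1 := measureReal_le_one
  nlinarith

lemma J_sub {y z : ℝ → ℝ} (hy : Continuous y) (hz : Continuous z) (x : ℝ) :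
    J μ (fun t => y t - z t) x = J μ y x - J μ z x := by
  unfold J
  rw [← intervalIntegral.integral_sub ((Q_cont hy).intervalIntegrable _ _)
    ((Q_cont hz).intervalIntegrable _ _)]
  congr 1; ext t
  rw [intervalIntegral.integral_sub (hy.intervalIntegrable _ _) (hz.intervalIntegrable _ _)]

lemma J_bound {y : ℝ → ℝ} (hy : Continuous y) {x W K : ℝ} (hx : x ∈ Icc (0:ℝ) 1) (hW : 0 ≤ W)
    (hK : 0 < K) (h : ∀ s ∈ Icc (0:ℝ) 1, |y s| ≤ W * Real.exp (K * s)) :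
    |J μ y x| ≤ W * Real.exp (K * x) / K := by
  unfold J
  have h1 : ∀ t ∈ Icc (0:ℝ) x, |∫ s in (0:ℝ)..t, y s ∂μ| ≤ W * Real.exp (K * t) := by
    intro t ht
    refine Q_bound ht.1 (by positivity) fun s hs => (h s ⟨hs.1, hs.2.trans (ht.2.trans hx.2)⟩).trans ?_
    gcongr
    exact hs.2
  have h2 : |∫ t in (0:ℝ)..x, ∫ s in (0:ℝ)..t, y s ∂μ| ≤ ∫ t in (0:ℝ)..x, W * Real.exp (K * t) := by
    refine (intervalIntegral.abs_integral_le_integral_abs hx.1).trans ?_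
    refine intervalIntegral.integral_mono_on hx.1 ((Q_cont hy).abs.intervalIntegrable _ _)
      (Continuous.intervalIntegrable (by fun_prop) _ _) h1
  refine h2.trans ?_
  have h3 : ∫ t in (0:ℝ)..x, W * Real.exp (K * t) = W * Real.exp (K * x) / K - W / K := by
    rw [intervalIntegral.integral_eq_sub_of_hasDerivAt (f := fun t => W * Real.exp (K * t) / K)]
    · simp
    · intro t _
      refine ((((hasDerivAt_id t).const_mul K).exp.const_mul W).div_const K).congr_deriv ?_
      simp; field_simp
    · exact Continuous.intervalIntegrable (by fun_prop) _ _
  rw [h3]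
  have : 0 ≤ W / K := by positivity
  linarith

lemma apriori {y : ℝ → ℝ} (hy : Continuous y) {M L K : ℝ} (hM : 0 ≤ M) (hL : 0 ≤ L)
    (hK : 0 < K) (hKL : 2 * L ≤ K) (h : ∀ x ∈ Icc (0:ℝ) 1, |y x| ≤ M + L * |J μ y x|) :
    ∀ x ∈ Icc (0:ℝ) 1, |y x| ≤ 2 * M * Real.exp (K * x) := by
  obtain ⟨x0, hx0, hmax⟩ := isCompact_Icc.exists_isMaxOn (nonempty_Icc.2 zero_le_one)
    (f := fun x => Real.exp (-(K * x)) * |y x|) (s := Icc (0:ℝ) 1) (by fun_prop)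
  set W := Real.exp (-(K * x0)) * |y x0| with hWd
  have hW : 0 ≤ W := by positivity
  have hb : ∀ x ∈ Icc (0:ℝ) 1, |y x| ≤ W * Real.exp (K * x) := by
    intro x hx
    have := hmax hx
    simp only [mem_ofPred_eq] at this
    have e : |y x| = Real.exp (-(K * x)) * |y x| * Real.exp (K * x) := by
      rw [mul_right_comm, ← Real.exp_add]; simp
    rw [e]
    gcongr
  have h1 := h x0 hx0
  have h2 := J_bound (μ := μ) hy hx0 hW hK hb
  have e0 : Real.exp (-(K * x0)) * Real.exp (K * x0) = 1 := by rw [← Real.exp_add]; simp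
  have e1 : Real.exp (-(K * x0)) ≤ 1 := by
    rw [Real.exp_le_one_iff]; nlinarith [hx0.1]
  have h3 : L * |J μ y x0| ≤ W * Real.exp (K * x0) / 2 := by
    calc L * |J μ y x0| ≤ K / 2 * (W * Real.exp (K * x0) / K) := by
          gcongr; linarith
      _ = _ := by field_simp
  have h4 : W ≤ Real.exp (-(K * x0)) * (M + W * Real.exp (K * x0) / 2) := by
    rw [hWd]; gcongr; linarith
  have h5 : W ≤ 2 * M := by nlinarith
  intro x hx
  exact (hb x hx).trans (by gcongr)

lemma Sol.vol {l : ℝ} {y g : ℝ → ℝ} (h : Sol μ l y g) {x : ℝ} (hx : x ∈ Icc (0:ℝ) 1) :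
    y x = y 0 + x * g 0 - l * J μ y x := by
  rw [h.hy x hx]
  have : ∫ t in (0:ℝ)..x, g t = ∫ t in (0:ℝ)..x, (g 0 - l * ∫ s in (0:ℝ)..t, y s ∂μ) := by
    refine intervalIntegral.integral_congr fun t ht => ?_
    rw [uIcc_of_le hx.1] at ht
    exact h.hg t ⟨ht.1, ht.2.trans hx.2⟩
  rw [this, intervalIntegral.integral_sub (by simp)
    (((Q_cont h.cy).intervalIntegrable _ _).const_mul _), intervalIntegral.integral_const_mul]
  simp [J]; ring

lemma Sol.lin {l : ℝ} {y g y' g' : ℝ → ℝ} (h : Sol μ l y g) (h' : Sol μ l y' g') (p q : ℝ) :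
    Sol μ l (fun t => p * y t + q * y' t) (fun t => p * g t + q * g' t) where
  cy := by have := h.cy; have := h'.cy; fun_prop
  cg := by have := h.cg; have := h'.cg; fun_prop
  hy x hx := by
    rw [intervalIntegral.integral_add ((h.cg.intervalIntegrable _ _).const_mul _)
      ((h'.cg.intervalIntegrable _ _).const_mul _)]
    simp only [intervalIntegral.integral_const_mul]
    rw [h.hy x hx, h'.hy x hx]; ring
  hg x hx := by
    rw [intervalIntegral.integral_add ((h.cy.intervalIntegrable _ _).const_mul _)
      ((h'.cy.intervalIntegrable _ _).const_mul _)]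
    simp only [intervalIntegral.integral_const_mul]
    rw [h.hg x hx, h'.hg x hx]; ring

/-- a-priori bound for the solution -/
lemma Sol.bound {l : ℝ} {y g : ℝ → ℝ} (h : Sol μ l y g) {x : ℝ} (hx : x ∈ Icc (0:ℝ) 1) :
    |y x| ≤ 2 * (|y 0| + |g 0|) * Real.exp ((2 * |l| + 1) * x) := by
  refine apriori (μ := μ) h.cy (by positivity) (abs_nonneg l) (by positivity) (by linarith) ?_ x hx
  intro x hx
  rw [h.vol hx]
  calc |y 0 + x * g 0 - l * J μ y x| ≤ |y 0| + |x * g 0| + |l * J μ y x| :=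
        (abs_sub _ _).trans (by gcongr; exact abs_add_le _ _)
    _ ≤ _ := by
      rw [abs_mul, abs_mul, abs_of_nonneg hx.1]
      have := mul_le_mul_of_nonneg_right hx.2 (abs_nonneg (g 0))
      linarith

lemma Sol.unique {l : ℝ} {y g y' g' : ℝ → ℝ} (h : Sol μ l y g) (h' : Sol μ l y' g')
    (e0 : y 0 = y' 0) (e1 : g 0 = g' 0) :
    ∀ x ∈ Icc (0:ℝ) 1, y x = y' x ∧ g x = g' x := by
  have hd := h.lin h' 1 (-1)
  have hz : ∀ x ∈ Icc (0:ℝ) 1, y x = y' x := by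
    intro x hx
    have := hd.bound hx
    simp only [e0, e1] at this
    have : |1 * y x + -1 * y' x| ≤ 0 := by simpa using this
    have := abs_nonpos_iff.1 this
    linarith
  intro x hx
  refine ⟨hz x hx, ?_⟩
  rw [h.hg x hx, h'.hg x hx, e1]
  congr 2
  refine intervalIntegral.integral_congr fun t ht => ?_
  rw [uIcc_of_le hx.1] at ht
  exact hz t ⟨ht.1, ht.2.trans hx.2⟩

/-- the primitive construction: a continuous solution of the Volterra equation gives a `Sol`. -/
lemma Sol.of_vol {l A B : ℝ} {y : ℝ → ℝ} (hy : Continuous y)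
    (h : ∀ x ∈ Icc (0:ℝ) 1, y x = A + x * B - l * J μ y x) :
    Sol μ l y (fun x => B - l * ∫ t in (0:ℝ)..x, y t ∂μ) where
  cy := hy
  cg := continuous_const.sub (continuous_const.mul (Q_cont hy))
  hy x hx := by
    rw [intervalIntegral.integral_sub (by simp)
      (((Q_cont hy).intervalIntegrable _ _).const_mul _), intervalIntegral.integral_const_mul]
    rw [h x hx, h 0 (by simp)]
    simp [J]; ring
  hg x hx := by simp

lemma exists_sol (l A B : ℝ) : ∃ y g : ℝ → ℝ, Sol μ l y g ∧ y 0 = A ∧ g 0 = B := by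
  set K : ℝ := 2 * |l| + 1 with hKd
  have hK : 0 < K := by positivity
  let ext : C(Icc (0:ℝ) 1, ℝ) → ℝ → ℝ := fun z x =>
    Real.exp (K * x) * IccExtend zero_le_one z x
  have hext : ∀ z, Continuous (ext z) := fun z =>
    (by fun_prop : Continuous fun x : ℝ => Real.exp (K * x)).mul z.continuous.Icc_extend'
  let Φ : C(Icc (0:ℝ) 1, ℝ) → C(Icc (0:ℝ) 1, ℝ) := fun z =>
    ⟨fun x => Real.exp (-(K * x)) * (A + x * B - l * J μ (ext z) x), by
      have := J_cont (μ := μ) (hext z)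
      fun_prop⟩
  have hΦ : ContractingWith (1/2) Φ := by
    refine ⟨by rw [← NNReal.coe_lt_coe]; norm_num, LipschitzWith.of_dist_le_mul fun z w => ?_⟩
    rw [ContinuousMap.dist_le (by positivity)]
    intro x
    show |Real.exp (-(K * x)) * (A + x * B - l * J μ (ext z) x)
      - Real.exp (-(K * x)) * (A + x * B - l * J μ (ext w) x)| ≤ _
    have e : Real.exp (-(K * x)) * (A + x * B - l * J μ (ext z) x)
      - Real.exp (-(K * x)) * (A + x * B - l * J μ (ext w) x)
      = - (Real.exp (-(K * x)) * l * J μ (fun t => ext z t - ext w t) x) := by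
      rw [J_sub (hext z) (hext w)]; ring
    rw [e, abs_neg, abs_mul, abs_mul, Real.abs_exp]
    have hb := J_bound (μ := μ) (y := fun t => ext z t - ext w t) ((hext z).sub (hext w)) x.2
      (W := dist z w) dist_nonneg hK (by
        intro s hs
        simp only [ext]
        rw [← mul_sub, abs_mul, Real.abs_exp, mul_comm]
        gcongr
        rw [IccExtend_of_mem _ _ hs, IccExtend_of_mem _ _ hs, ← Real.dist_eq]
        exact ContinuousMap.dist_apply_le_dist _)
    have e0 : Real.exp (-(K * x)) * Real.exp (K * x) = 1 := by rw [← Real.exp_add]; simp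
    calc _ ≤ Real.exp (-(K * x)) * |l| * (dist z w * Real.exp (K * x) / K) := by gcongr
      _ = (|l| / K) * dist z w * (Real.exp (-(K * x)) * Real.exp (K * x)) := by ring
      _ = (|l| / K) * dist z w := by rw [e0, mul_one]
      _ ≤ _ := by
        gcongr
        rw [div_le_iff₀ hK, hKd]; push_cast; linarith
  have hfix : Φ (ContractingWith.fixedPoint Φ hΦ) = ContractingWith.fixedPoint Φ hΦ :=
    hΦ.fixedPoint_isFixedPt
  set z := ContractingWith.fixedPoint Φ hΦ
  have hv : ∀ x ∈ Icc (0:ℝ) 1, ext z x = A + x * B - l * J μ (ext z) x := by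
    intro x hx
    have e0 : Real.exp (K * x) * Real.exp (-(K * x)) = 1 := by rw [← Real.exp_add]; simp
    have : z ⟨x, hx⟩ = Real.exp (-(K * x)) * (A + x * B - l * J μ (ext z) x) := by
      conv_lhs => rw [← hfix]
      rfl
    have e2 : ext z x = Real.exp (K * x) * z ⟨x, hx⟩ := by
      simp only [ext]; rw [IccExtend_of_mem _ _ hx]
    rw [e2, this, ← mul_assoc, e0, one_mul]
  refine ⟨_, _, Sol.of_vol (hext z) hv, ?_, ?_⟩
  · rw [hv 0 (by simp)]; simp [J]
  · simp

end
end Cant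

set_option linter.unusedSectionVars false
set_option linter.unusedVariables false

namespace Cant
open Set
section
variable {μ : Measure ℝ} [IsProbabilityMeasure μ] [NullSingletonClass μ]

lemma fubini_tri {f q : ℝ → ℝ} (hf : Continuous f) (hq : Continuous q) :
    ∫ t in (0:ℝ)..1, f t * ∫ s in (0:ℝ)..t, q s ∂μ
      = ∫ s in (0:ℝ)..1, q s * (∫ t in s..1, f t) ∂μ := by
  have hfi : Integrable f (volume.restrict (Ioc (0:ℝ) 1)) :=
    (hf.integrableOn_Icc (a := 0) (b := 1)).mono_set Ioc_subset_Icc_self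
  have hqi : Integrable q (μ.restrict (Ioc (0:ℝ) 1)) :=
    (hq.integrableOn_Icc (a := 0) (b := 1)).mono_set Ioc_subset_Icc_self
  have hS : MeasurableSet {p : ℝ × ℝ | p.2 ≤ p.1} := measurableSet_le measurable_snd measurable_fst
  have hint := (hfi.mul_prod hqi).indicator hS
  have hsw := integral_integral_swap (f := fun t s =>
    ({p : ℝ × ℝ | p.2 ≤ p.1}.indicator (fun z => f z.1 * q z.2)) (t, s)) hint
  rw [intervalIntegral.integral_of_le zero_le_one, intervalIntegral.integral_of_le zero_le_one]
  have e1 : ∫ t in Ioc (0:ℝ) 1, f t * ∫ s in (0:ℝ)..t, q s ∂μ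
      = ∫ t in Ioc (0:ℝ) 1, ∫ s in Ioc (0:ℝ) 1,
        ({p : ℝ × ℝ | p.2 ≤ p.1}.indicator (fun z => f z.1 * q z.2)) (t, s) ∂μ := by
    refine setIntegral_congr_fun measurableSet_Ioc fun t ht => ?_
    have : (fun s => ({p : ℝ × ℝ | p.2 ≤ p.1}.indicator (fun z => f z.1 * q z.2)) (t, s))
        = (Iic t).indicator (fun s => f t * q s) := by
      ext s; simp [indicator]
    simp only [this]
    rw [setIntegral_indicator measurableSet_Iic, integral_const_mul,
      intervalIntegral.integral_of_le ht.1.le]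
    congr 3
    ext s; simp only [mem_inter_iff, mem_Ioc, mem_Iic]
    constructor
    · rintro ⟨h1, h2⟩; exact ⟨⟨h1, h2.trans ht.2⟩, h2⟩
    · rintro ⟨⟨h1, _⟩, h2⟩; exact ⟨h1, h2⟩
  have e2 : ∫ s in Ioc (0:ℝ) 1, q s * (∫ t in s..1, f t) ∂μ
      = ∫ s in Ioc (0:ℝ) 1, ∫ t in Ioc (0:ℝ) 1,
        ({p : ℝ × ℝ | p.2 ≤ p.1}.indicator (fun z => f z.1 * q z.2)) (t, s) ∂volume ∂μ := by
    refine setIntegral_congr_fun measurableSet_Ioc fun s hs => ?_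
    have : (fun t => ({p : ℝ × ℝ | p.2 ≤ p.1}.indicator (fun z => f z.1 * q z.2)) (t, s))
        = (Ici s).indicator (fun t => f t * q s) := by
      ext t; simp [indicator]
    simp only [this]
    rw [setIntegral_indicator measurableSet_Ici, integral_mul_const,
      intervalIntegral.integral_of_le hs.2, mul_comm, ← integral_Icc_eq_integral_Ioc]
    congr 3
    ext t; simp only [mem_inter_iff, mem_Ioc, mem_Icc, mem_Ici]
    constructor
    · rintro ⟨h1, h2⟩; exact ⟨⟨hs.1.trans_le h1, h2⟩, h1⟩
    · rintro ⟨⟨h1, h3⟩, h2⟩; exact ⟨h2, h3⟩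
  rw [e1, e2, hsw]

lemma Sol.half {l1 l2 : ℝ} {y1 g1 y2 g2 : ℝ → ℝ} (h1 : Sol μ l1 y1 g1) (h2 : Sol μ l2 y2 g2) :
    ∫ t in (0:ℝ)..1, g1 t * g2 t
      = y1 1 * g2 1 - y1 0 * g2 0 + l2 * ∫ t in (0:ℝ)..1, y1 t * y2 t ∂μ := by
  have i1 : (1:ℝ) ∈ Icc (0:ℝ) 1 := by simp
  have e1 : ∫ t in (0:ℝ)..1, g1 t * g2 t
      = ∫ t in (0:ℝ)..1, (g1 t * g2 0 - l2 * (g1 t * ∫ s in (0:ℝ)..t, y2 s ∂μ)) := by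
    refine intervalIntegral.integral_congr fun t ht => ?_
    rw [uIcc_of_le zero_le_one] at ht
    rw [h2.hg t ht]; ring
  have hq := Q_cont (μ := μ) h2.cy
  rw [e1, intervalIntegral.integral_sub ((h1.cg.fun_mul continuous_const).intervalIntegrable _ _)
    ((continuous_const.fun_mul (h1.cg.fun_mul hq)).intervalIntegrable _ _),
    intervalIntegral.integral_mul_const, intervalIntegral.integral_const_mul,
    fubini_tri h1.cg h2.cy]
  have e2 : ∫ s in (0:ℝ)..1, y2 s * (∫ t in s..1, g1 t) ∂μ
      = ∫ s in (0:ℝ)..1, (y2 s * y1 1 - y1 s * y2 s) ∂μ := by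
    refine intervalIntegral.integral_congr fun t ht => ?_
    rw [uIcc_of_le zero_le_one] at ht
    have := intervalIntegral.integral_add_adjacent_intervals
      (h1.cg.intervalIntegrable (μ := volume) 0 t) (h1.cg.intervalIntegrable (μ := volume) t 1)
    have a1 := h1.hy t ht
    have a2 := h1.hy 1 i1
    have : ∫ t in t..1, g1 t = y1 1 - y1 t := by linarith
    rw [this]; ring
  rw [e2, intervalIntegral.integral_sub ((h2.cy.fun_mul continuous_const).intervalIntegrable _ _)
    ((h1.cy.fun_mul h2.cy).intervalIntegrable _ _), intervalIntegral.integral_mul_const]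
  have a2 := h1.hy 1 i1
  have a3 := h2.hg 1 i1
  have a4 : ∫ t in (0:ℝ)..1, g1 t = y1 1 - y1 0 := by linarith
  have a5 : l2 * ∫ t in (0:ℝ)..1, y2 t ∂μ = g2 0 - g2 1 := by linarith
  rw [a4]
  linear_combination (-y1 1) * a5

lemma Sol.lagrange {l1 l2 : ℝ} {y1 g1 y2 g2 : ℝ → ℝ} (h1 : Sol μ l1 y1 g1)
    (h2 : Sol μ l2 y2 g2) :
    (y1 1 * g2 1 - g1 1 * y2 1) - (y1 0 * g2 0 - g1 0 * y2 0)
      = (l1 - l2) * ∫ t in (0:ℝ)..1, y1 t * y2 t ∂μ := by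
  have e1 := h1.half h2
  have e2 := h2.half h1
  have e3 : ∫ t in (0:ℝ)..1, g1 t * g2 t = ∫ t in (0:ℝ)..1, g2 t * g1 t := by
    congr 1; ext t; ring
  have e4 : ∫ t in (0:ℝ)..1, y1 t * y2 t ∂μ = ∫ t in (0:ℝ)..1, y2 t * y1 t ∂μ := by
    congr 1; ext t; ring
  rw [← e4] at e2
  linear_combination e3 - e1 + e2

lemma exp_le_of {K x : ℝ} (hK : 0 ≤ K) (hx : x ∈ Icc (0:ℝ) 1) : Real.exp (K * x) ≤ Real.exp K := by
  apply Real.exp_le_exp.2; nlinarith [hx.2]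

lemma sol_diff (M R : ℝ) (hM : 0 ≤ M) (hR : 0 ≤ R) : ∃ Z : ℝ, 0 ≤ Z ∧ ∀ (l1 l2 : ℝ) (y1 g1 y2 g2 : ℝ → ℝ),
    Sol μ l1 y1 g1 → Sol μ l2 y2 g2 → |l1| ≤ M → |l2| ≤ M → y1 0 = y2 0 → g1 0 = g2 0 →
    |y1 0| + |g1 0| ≤ R → ∀ x ∈ Icc (0:ℝ) 1, |y1 x - y2 x| ≤ Z * |l1 - l2| ∧
      |g1 x - g2 x| ≤ Z * |l1 - l2| ∧ |y1 x| ≤ Z := by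
  set K := 2 * M + 1 with hKd
  have hK : 0 < K := by positivity
  set B := 2 * R * Real.exp K with hB
  have hB0 : 0 ≤ B := by positivity
  set Z1 := 2 * B * Real.exp K with hZ1
  have hZ0 : 0 ≤ Z1 := by positivity
  refine ⟨B + Z1 + M * Z1, by positivity, ?_⟩
  intro l1 l2 y1 g1 y2 g2 h1 h2 hl1 hl2 e0 e1 hr
  have bb : ∀ l y g, Sol μ l y g → |l| ≤ M → |y 0| + |g 0| ≤ R → ∀ x ∈ Icc (0:ℝ) 1, |y x| ≤ B := by
    intro l y g h hl hr x hx
    refine (h.bound hx).trans ?_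
    rw [hB]
    gcongr
    calc (2 * |l| + 1) * x ≤ K * 1 := by
          have := hx.1
          gcongr
          · linarith
          · exact hx.2
      _ = K := mul_one _
  have b1 := bb _ _ _ h1 hl1 hr
  have b2 := bb _ _ _ h2 hl2 (by rw [← e0, ← e1]; exact hr)
  have hJ : ∀ x ∈ Icc (0:ℝ) 1, |J μ y2 x| ≤ B := by
    intro x hx
    unfold J
    have : ∀ t ∈ Icc (0:ℝ) x, |∫ s in (0:ℝ)..t, y2 s ∂μ| ≤ B := fun t ht =>
      Q_bound ht.1 hB0 fun s hs => b2 s ⟨hs.1, hs.2.trans (ht.2.trans hx.2)⟩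
    have := intervalIntegral.norm_integral_le_of_norm_le_const (a := (0:ℝ)) (b := x) (C := B)
      (f := fun t => ∫ s in (0:ℝ)..t, y2 s ∂μ) (by
        intro t ht; rw [uIoc_of_le hx.1] at ht; exact this t ⟨ht.1.le, ht.2⟩)
    rw [Real.norm_eq_abs] at this
    refine this.trans ?_
    rw [sub_zero, abs_of_nonneg hx.1]
    nlinarith [hx.2]
  have hy : ∀ x ∈ Icc (0:ℝ) 1, |y1 x - y2 x| ≤ Z1 * |l1 - l2| := by
    intro x hx
    have := apriori (μ := μ) (y := fun x => y1 x - y2 x) (M := |l1 - l2| * B) (L := |l1|) (K := K)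
      (h1.cy.sub h2.cy) (by positivity) (abs_nonneg _) hK (by linarith) (by
        intro x hx
        rw [J_sub h1.cy h2.cy, h1.vol hx, h2.vol hx]
        have : y1 0 + x * g1 0 - l1 * J μ y1 x - (y2 0 + x * g2 0 - l2 * J μ y2 x)
          = -((l1 - l2) * J μ y2 x) - l1 * (J μ y1 x - J μ y2 x) := by
          rw [e0, e1]; ring
        rw [this]
        refine (abs_sub _ _).trans ?_
        rw [abs_neg, abs_mul, abs_mul]
        have := hJ x hx
        gcongr) x hx
    refine this.trans ?_
    have e := exp_le_of hK.le hx
    calc 2 * (|l1 - l2| * B) * Real.exp (K * x) ≤ 2 * (|l1 - l2| * B) * Real.exp K := by gcongr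
      _ = _ := by rw [hZ1]; ring
  intro x hx
  refine ⟨(hy x hx).trans ?_, ?_, (b1 x hx).trans ?_⟩
  · gcongr
    nlinarith [mul_nonneg hM hZ0]
  · rw [h1.hg x hx, h2.hg x hx, e1]
    have q1 : |∫ t in (0:ℝ)..x, (y1 t - y2 t) ∂μ| ≤ Z1 * |l1 - l2| :=
      Q_bound hx.1 (by positivity) fun t ht => hy t ⟨ht.1, ht.2.trans hx.2⟩
    have q2 : |∫ t in (0:ℝ)..x, y1 t ∂μ| ≤ B :=
      Q_bound hx.1 hB0 fun t ht => b1 t ⟨ht.1, ht.2.trans hx.2⟩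
    rw [intervalIntegral.integral_sub (h1.cy.intervalIntegrable _ _) (h2.cy.intervalIntegrable _ _)] at q1
    set I1 := ∫ t in (0:ℝ)..x, y1 t ∂μ
    set I2 := ∫ t in (0:ℝ)..x, y2 t ∂μ
    have : g2 0 - l1 * I1 - (g2 0 - l2 * I2) = -((l1 - l2) * I1) - l2 * (I1 - I2) := by ring
    rw [this]
    refine (abs_sub _ _).trans ?_
    rw [abs_neg, abs_mul, abs_mul]
    have : |l1 - l2| * |I1| ≤ |l1 - l2| * B := by gcongr
    have : |l2| * |I1 - I2| ≤ M * (Z1 * |l1 - l2|) := by gcongr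
    have : 0 ≤ Z1 * |l1 - l2| := by positivity
    nlinarith
  · nlinarith [mul_nonneg hM hZ0]

end

section
variable (μ : Measure ℝ) [IsProbabilityMeasure μ] [NullSingletonClass μ]

noncomputable def Cy (l : ℝ) : ℝ → ℝ := (exists_sol (μ := μ) l 1 0).choose
noncomputable def Cg (l : ℝ) : ℝ → ℝ := (exists_sol (μ := μ) l 1 0).choose_spec.choose
noncomputable def Sy (l : ℝ) : ℝ → ℝ := (exists_sol (μ := μ) l 0 1).choose
noncomputable def Sg (l : ℝ) : ℝ → ℝ := (exists_sol (μ := μ) l 0 1).choose_spec.choose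

lemma C_sol (l : ℝ) : Sol μ l (Cy μ l) (Cg μ l) :=
  (exists_sol (μ := μ) l 1 0).choose_spec.choose_spec.1
@[simp] lemma Cy0 (l : ℝ) : Cy μ l 0 = 1 := (exists_sol (μ := μ) l 1 0).choose_spec.choose_spec.2.1
@[simp] lemma Cg0 (l : ℝ) : Cg μ l 0 = 0 := (exists_sol (μ := μ) l 1 0).choose_spec.choose_spec.2.2
lemma S_sol (l : ℝ) : Sol μ l (Sy μ l) (Sg μ l) :=
  (exists_sol (μ := μ) l 0 1).choose_spec.choose_spec.1
@[simp] lemma Sy0 (l : ℝ) : Sy μ l 0 = 0 := (exists_sol (μ := μ) l 0 1).choose_spec.choose_spec.2.1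
@[simp] lemma Sg0 (l : ℝ) : Sg μ l 0 = 1 := (exists_sol (μ := μ) l 0 1).choose_spec.choose_spec.2.2

variable {μ}

/-- every solution is a combination -/
lemma Sol.repr {l : ℝ} {y g : ℝ → ℝ} (h : Sol μ l y g) {x : ℝ} (hx : x ∈ Icc (0:ℝ) 1) :
    y x = y 0 * Cy μ l x + g 0 * Sy μ l x ∧ g x = y 0 * Cg μ l x + g 0 * Sg μ l x :=
  h.unique ((C_sol μ l).lin (S_sol μ l) (y 0) (g 0)) (by simp) (by simp) x hx

lemma det_one (l : ℝ) : Cy μ l 1 * Sg μ l 1 - Sy μ l 1 * Cg μ l 1 = 1 := by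
  have := (C_sol μ l).lagrange (S_sol μ l)
  simp at this
  linarith

/-- families of solutions depending Lipschitz-continuously -/
lemma C_lip (M : ℝ) (hM : 0 ≤ M) : ∃ Z : ℝ, 0 ≤ Z ∧ ∀ l1 l2, |l1| ≤ M → |l2| ≤ M → ∀ x ∈ Icc (0:ℝ) 1,
    |Cy μ l1 x - Cy μ l2 x| ≤ Z * |l1 - l2| ∧ |Cg μ l1 x - Cg μ l2 x| ≤ Z * |l1 - l2| ∧
    |Cy μ l1 x| ≤ Z := by
  obtain ⟨Z, hZ, h⟩ := sol_diff (μ := μ) M 1 hM zero_le_one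
  exact ⟨Z, hZ, fun l1 l2 h1 h2 => h l1 l2 _ _ _ _ (C_sol μ l1) (C_sol μ l2) h1 h2 (by simp)
    (by simp) (by simp)⟩

lemma S_lip (M : ℝ) (hM : 0 ≤ M) : ∃ Z : ℝ, 0 ≤ Z ∧ ∀ l1 l2, |l1| ≤ M → |l2| ≤ M → ∀ x ∈ Icc (0:ℝ) 1,
    |Sy μ l1 x - Sy μ l2 x| ≤ Z * |l1 - l2| ∧ |Sg μ l1 x - Sg μ l2 x| ≤ Z * |l1 - l2| ∧
    |Sy μ l1 x| ≤ Z := by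
  obtain ⟨Z, hZ, h⟩ := sol_diff (μ := μ) M 1 hM zero_le_one
  exact ⟨Z, hZ, fun l1 l2 h1 h2 => h l1 l2 _ _ _ _ (S_sol μ l1) (S_sol μ l2) h1 h2 (by simp)
    (by simp) (by simp)⟩

lemma cont_of_lip {f : ℝ → ℝ} (h : ∀ M : ℝ, 0 ≤ M → ∃ Z : ℝ, 0 ≤ Z ∧ ∀ l1 l2, |l1| ≤ M → |l2| ≤ M →
    |f l1 - f l2| ≤ Z * |l1 - l2|) : Continuous f := by
  rw [continuous_iff_continuousAt]
  intro l
  obtain ⟨Z, hZ, hz⟩ := h (|l| + 1) (by positivity)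
  have : LipschitzOnWith ⟨Z, hZ⟩ f (Metric.ball l 1) := by
    refine LipschitzOnWith.of_dist_le_mul fun x hx y hy => ?_
    rw [Real.dist_eq, Real.dist_eq]
    rw [Metric.mem_ball, Real.dist_eq] at hx hy
    refine hz x y ?_ ?_
    · have := abs_sub_abs_le_abs_sub x l; linarith
    · have := abs_sub_abs_le_abs_sub y l; linarith
  exact this.continuousOn.continuousAt (Metric.ball_mem_nhds l one_pos)

lemma Cy_cont {x : ℝ} (hx : x ∈ Icc (0:ℝ) 1) : Continuous fun l => Cy μ l x :=
  cont_of_lip fun M hM => let ⟨Z, hZ, h⟩ := C_lip (μ := μ) M hM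
    ⟨Z, hZ, fun l1 l2 h1 h2 => (h l1 l2 h1 h2 x hx).1⟩
lemma Cg_cont {x : ℝ} (hx : x ∈ Icc (0:ℝ) 1) : Continuous fun l => Cg μ l x :=
  cont_of_lip fun M hM => let ⟨Z, hZ, h⟩ := C_lip (μ := μ) M hM
    ⟨Z, hZ, fun l1 l2 h1 h2 => (h l1 l2 h1 h2 x hx).2.1⟩
lemma Sy_cont {x : ℝ} (hx : x ∈ Icc (0:ℝ) 1) : Continuous fun l => Sy μ l x :=
  cont_of_lip fun M hM => let ⟨Z, hZ, h⟩ := S_lip (μ := μ) M hM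
    ⟨Z, hZ, fun l1 l2 h1 h2 => (h l1 l2 h1 h2 x hx).1⟩
lemma Sg_cont {x : ℝ} (hx : x ∈ Icc (0:ℝ) 1) : Continuous fun l => Sg μ l x :=
  cont_of_lip fun M hM => let ⟨Z, hZ, h⟩ := S_lip (μ := μ) M hM
    ⟨Z, hZ, fun l1 l2 h1 h2 => (h l1 l2 h1 h2 x hx).2.1⟩

/-- joint continuity of the pairings; abstract form -/
lemma pair_cont {u v : ℝ → ℝ → ℝ} (hu : ∀ l, Continuous (u l)) (hv : ∀ l, Continuous (v l))
    (Lu : ∀ M : ℝ, 0 ≤ M → ∃ Z : ℝ, 0 ≤ Z ∧ ∀ l1 l2, |l1| ≤ M → |l2| ≤ M → ∀ x ∈ Icc (0:ℝ) 1,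
      |u l1 x - u l2 x| ≤ Z * |l1 - l2| ∧ |u l1 x| ≤ Z)
    (Lv : ∀ M : ℝ, 0 ≤ M → ∃ Z : ℝ, 0 ≤ Z ∧ ∀ l1 l2, |l1| ≤ M → |l2| ≤ M → ∀ x ∈ Icc (0:ℝ) 1,
      |v l1 x - v l2 x| ≤ Z * |l1 - l2| ∧ |v l1 x| ≤ Z) :
    Continuous fun p : ℝ × ℝ => ∫ t in (0:ℝ)..1, u p.1 t * v p.2 t ∂μ := by
  rw [continuous_iff_continuousAt]
  rintro ⟨a, b⟩
  set M := |a| + |b| + 1 with hM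
  obtain ⟨Z, hZ, hz⟩ := Lu M (by positivity)
  obtain ⟨Y, hY, hy⟩ := Lv M (by positivity)
  have ha : |a| ≤ M := by have := abs_nonneg b; linarith
  have hb : |b| ≤ M := by have := abs_nonneg a; linarith
  rw [ContinuousAt, tendsto_iff_norm_sub_tendsto_zero]
  have hlim : Filter.Tendsto (fun p : ℝ × ℝ => (Z * |p.1 - a|) * Y + Z * (Y * |p.2 - b|)) (nhds (a, b))
      (nhds 0) := by
    have : Continuous (fun p : ℝ × ℝ => (Z * |p.1 - a|) * Y + Z * (Y * |p.2 - b|)) := by fun_prop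
    have := this.tendsto (a, b)
    simpa using this
  refine squeeze_zero' (Filter.Eventually.of_forall fun _ => norm_nonneg _) ?_ hlim
  filter_upwards [Metric.ball_mem_nhds (a, b) one_pos] with p hp
  rw [Metric.mem_ball, Prod.dist_eq, max_lt_iff, Real.dist_eq, Real.dist_eq] at hp
  have h1 : |p.1| ≤ M := by
    have := abs_sub_abs_le_abs_sub p.1 a; have := abs_nonneg b; simp only at hp; linarith [hp.1]
  have h2 : |p.2| ≤ M := by
    have := abs_sub_abs_le_abs_sub p.2 b; have := abs_nonneg a; simp only at hp; linarith [hp.2]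
  rw [← intervalIntegral.integral_sub (((hu _).fun_mul (hv _)).intervalIntegrable _ _)
    (((hu _).fun_mul (hv _)).intervalIntegrable _ _), Real.norm_eq_abs]
  refine Q_bound zero_le_one (by positivity) fun t ht => ?_
  have : u p.1 t * v p.2 t - u a t * v b t = (u p.1 t - u a t) * v p.2 t
    + u a t * (v p.2 t - v b t) := by ring
  rw [this]
  refine (abs_add_le _ _).trans ?_
  rw [abs_mul, abs_mul]
  have q1 := (hz p.1 a h1 ha t ht).1
  have q2 := (hz a a ha ha t ht).2
  have q3 := (hy p.2 b h2 hb t ht).1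
  have q4 := (hy p.2 b h2 hb t ht).2
  gcongr

noncomputable def kCC (μ : Measure ℝ) [IsProbabilityMeasure μ] [NullSingletonClass μ] (p : ℝ × ℝ) : ℝ :=
  ∫ t in (0:ℝ)..1, Cy μ p.1 t * Cy μ p.2 t ∂μ
noncomputable def kCS (μ : Measure ℝ) [IsProbabilityMeasure μ] [NullSingletonClass μ] (p : ℝ × ℝ) : ℝ :=
  ∫ t in (0:ℝ)..1, Cy μ p.1 t * Sy μ p.2 t ∂μ
noncomputable def kSS (μ : Measure ℝ) [IsProbabilityMeasure μ] [NullSingletonClass μ] (p : ℝ × ℝ) : ℝ :=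
  ∫ t in (0:ℝ)..1, Sy μ p.1 t * Sy μ p.2 t ∂μ

lemma C_lip' (M : ℝ) (hM : 0 ≤ M) : ∃ Z : ℝ, 0 ≤ Z ∧ ∀ l1 l2, |l1| ≤ M → |l2| ≤ M → ∀ x ∈ Icc (0:ℝ) 1,
    |Cy μ l1 x - Cy μ l2 x| ≤ Z * |l1 - l2| ∧ |Cy μ l1 x| ≤ Z :=
  let ⟨Z, hZ, h⟩ := C_lip (μ := μ) M hM
  ⟨Z, hZ, fun l1 l2 h1 h2 x hx => ⟨(h l1 l2 h1 h2 x hx).1, (h l1 l2 h1 h2 x hx).2.2⟩⟩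
lemma S_lip' (M : ℝ) (hM : 0 ≤ M) : ∃ Z : ℝ, 0 ≤ Z ∧ ∀ l1 l2, |l1| ≤ M → |l2| ≤ M → ∀ x ∈ Icc (0:ℝ) 1,
    |Sy μ l1 x - Sy μ l2 x| ≤ Z * |l1 - l2| ∧ |Sy μ l1 x| ≤ Z :=
  let ⟨Z, hZ, h⟩ := S_lip (μ := μ) M hM
  ⟨Z, hZ, fun l1 l2 h1 h2 x hx => ⟨(h l1 l2 h1 h2 x hx).1, (h l1 l2 h1 h2 x hx).2.2⟩⟩

lemma kCC_cont : Continuous (kCC μ) :=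
  pair_cont (fun l => (C_sol μ l).cy) (fun l => (C_sol μ l).cy) C_lip' C_lip'
lemma kCS_cont : Continuous (kCS μ) :=
  pair_cont (fun l => (C_sol μ l).cy) (fun l => (S_sol μ l).cy) C_lip' S_lip'
lemma kSS_cont : Continuous (kSS μ) :=
  pair_cont (fun l => (S_sol μ l).cy) (fun l => (S_sol μ l).cy) S_lip' S_lip'

end
end Cant

set_option linter.unusedSectionVars false
set_option linter.unusedVariables false

namespace Cant
open Set
section
variable {μ : Measure ℝ} [IsProbabilityMeasure μ] [NullSingletonClass μ]

/-- self-similarity of the measure in integrated form -/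
structure SS (κ : ℕ) (a b : ℝ) (μ : Measure ℝ) : Prop where
  ss : ∀ k : ℕ, k < κ → ∀ t ∈ Icc (0:ℝ) 1, ∀ f : ℝ → ℝ, Continuous f →
    ∫ s in (k * (a + b))..(k * (a + b) + a * t), f s ∂μ
      = (1 / κ) * ∫ s in (0:ℝ)..t, f (k * (a + b) + a * s) ∂μ
  gap : ∀ k : ℕ, k + 1 < κ → ∀ x ∈ Icc (k * (a + b) + a) ((k + 1) * (a + b)), ∀ f : ℝ → ℝ,
    ∫ s in (k * (a + b) + a)..x, f s ∂μ = 0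

lemma ss_of {P : ℝ → ℝ} {κ : ℕ} (hκ : 0 < κ) {a α c : ℝ} (ha : 0 < a) (hα : 0 ≤ α) (hα1 : α + a ≤ 1)
    (hI : ∀ x y, 0 ≤ x → x ≤ y → y ≤ 1 → μ (Ioc x y) = ENNReal.ofReal (P y - P x))
    (hc : ∀ x ∈ Icc (0:ℝ) 1, κ * P (α + a * x) = P x + c) {t : ℝ} (ht : t ∈ Icc (0:ℝ) 1)
    {f : ℝ → ℝ} (hf : Continuous f) :
    ∫ s in α..(α + a * t), f s ∂μ = (1 / κ) * ∫ s in (0:ℝ)..t, f (α + a * s) ∂μ := by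
  have hκ' : (0:ℝ) < κ := by exact_mod_cast hκ
  have hφ : Measurable (fun s : ℝ => α + a * s) := by fun_prop
  have hm : μ.restrict (Ioc α (α + a))
      = (ENNReal.ofReal (1 / κ)) • Measure.map (fun s => α + a * s) (μ.restrict (Ioc 0 1)) := by
    have : IsFiniteMeasure (Measure.map (fun s => α + a * s) (μ.restrict (Ioc 0 1))) :=
      Measure.isFiniteMeasure_map _ _
    refine Measure.ext_of_Iic _ _ fun q => ?_
    rw [Measure.smul_apply, Measure.map_apply hφ measurableSet_Iic,
      Measure.restrict_apply measurableSet_Iic,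
      Measure.restrict_apply (hφ measurableSet_Iic), smul_eq_mul]
    by_cases hq : q ≤ α
    · have e1 : Iic q ∩ Ioc α (α + a) = ∅ := by
        ext x; simp only [mem_inter_iff, mem_Iic, mem_Ioc, mem_empty_iff_false, iff_false]
        intro h; linarith [h.1, h.2.1]
      have e2 : (fun s => α + a * s) ⁻¹' Iic q ∩ Ioc 0 1 = ∅ := by
        ext x; simp only [mem_inter_iff, mem_preimage, mem_Iic, mem_Ioc, mem_empty_iff_false, iff_false]
        intro h; nlinarith [h.1, h.2.1]
      rw [e1, e2]; simp
    · push Not at hq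
      set u := min ((q - α) / a) 1 with hu
      have hu0 : 0 ≤ u := le_min (div_nonneg (by linarith) ha.le) zero_le_one
      have hu1 : u ≤ 1 := min_le_right _ _
      have e1 : Iic q ∩ Ioc α (α + a) = Ioc α (α + a * u) := by
        ext x; simp only [mem_inter_iff, mem_Iic, mem_Ioc]
        have : x ≤ α + a * u ↔ x ≤ q ∧ x ≤ α + a := by
          have h1 : x ≤ α + a * u ↔ (x - α) / a ≤ u := by
            rw [div_le_iff₀ ha]; constructor <;> intro h <;> linarith
          rw [h1, hu, le_min_iff, div_le_div_iff_of_pos_right ha, div_le_one ha]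
          constructor <;> rintro ⟨h, h'⟩ <;> constructor <;> linarith
        rw [this]; tauto
      have e2 : (fun s => α + a * s) ⁻¹' Iic q ∩ Ioc 0 1 = Ioc 0 u := by
        ext x; simp only [mem_inter_iff, mem_preimage, mem_Iic, mem_Ioc]
        have : x ≤ u ↔ α + a * x ≤ q ∧ x ≤ 1 := by
          rw [hu, le_min_iff, le_div_iff₀ ha]
          constructor <;> rintro ⟨h, h'⟩ <;> constructor <;> linarith
        rw [this]; tauto
      have hau : a * u ≤ a := by nlinarith
      have hau0 : 0 ≤ a * u := by positivity
      rw [e1, e2, hI _ _ hα (by linarith) (by linarith), hI _ _ le_rfl hu0 hu1,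
        ← ENNReal.ofReal_mul (by positivity)]
      congr 1
      have c1 := hc u ⟨hu0, hu1⟩
      have c2 := hc 0 (by simp)
      rw [mul_zero, add_zero] at c2
      field_simp
      linarith
  have hat : a * t ≤ a := by nlinarith [ht.2]
  rw [intervalIntegral.integral_of_le (by nlinarith [ht.1]), intervalIntegral.integral_of_le ht.1]
  have e1 : ∫ s in Ioc α (α + a * t), f s ∂μ
      = ∫ s in Ioc α (α + a * t), f s ∂(μ.restrict (Ioc α (α + a))) := by
    rw [Measure.restrict_restrict measurableSet_Ioc]
    congr 2
    rw [inter_eq_left.2 (Ioc_subset_Ioc_right (by linarith))]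
  rw [e1, hm, Measure.restrict_smul, integral_smul_measure,
    setIntegral_map measurableSet_Ioc hf.aestronglyMeasurable hφ.aemeasurable,
    Measure.restrict_restrict (hφ measurableSet_Ioc), ENNReal.toReal_ofReal (by positivity), smul_eq_mul]
  congr 3
  ext x
  simp only [mem_inter_iff, mem_preimage, mem_Ioc]
  constructor
  · rintro ⟨⟨h1, h2⟩, h3, h4⟩
    exact ⟨h3, by nlinarith⟩
  · rintro ⟨h1, h2⟩
    exact ⟨⟨by nlinarith, by nlinarith⟩, h1, h2.trans ht.2⟩

/-- one block -/
lemma Sol.block {κ : ℕ} {a b l : ℝ} (hκ : 0 < κ) (ha : 0 < a) (hb : 0 ≤ b)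
    (hS : SS κ a b μ) (hab : (κ - 1) * (a + b) + a = 1)
    {y g : ℝ → ℝ} (h : Sol μ (κ / a * l) y g) {k : ℕ} (hk : k < κ) :
    Sol μ l (fun t => y (k * (a + b) + a * t)) (fun t => a * g (k * (a + b) + a * t)) := by
  have hκ' : (0:ℝ) < κ := by exact_mod_cast hκ
  have hk' : (k:ℝ) ≤ κ - 1 := by
    have : (k:ℝ) + 1 ≤ κ := by exact_mod_cast hk
    linarith
  set α := k * (a + b) with hα
  have hα0 : 0 ≤ α := by positivity
  have hα1 : α + a ≤ 1 := by rw [hα]; nlinarith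
  have mem : ∀ t ∈ Icc (0:ℝ) 1, α + a * t ∈ Icc (0:ℝ) 1 := fun t ht =>
    ⟨by nlinarith [ht.1], by nlinarith [ht.2]⟩
  refine ⟨?_, ?_, ?_, ?_⟩
  · have := h.cy; fun_prop
  · have := h.cg; fun_prop
  · intro t ht
    have e1 := h.hy _ (mem t ht)
    have e2 := h.hy _ (mem 0 (by simp))
    have e3 := intervalIntegral.integral_add_adjacent_intervals
      (h.cg.intervalIntegrable (μ := volume) 0 (α + a * 0))
      (h.cg.intervalIntegrable (μ := volume) (α + a * 0) (α + a * t))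
    rw [intervalIntegral.integral_const_mul]
    have e4 := intervalIntegral.integral_comp_mul_add (a := 0) (b := t) g ha.ne' α
    have e5 : ∀ x, g (a * x + α) = g (α + a * x) := fun x => by rw [add_comm]
    simp only [e5] at e4
    rw [e4, add_comm (a * 0), add_comm (a * t), smul_eq_mul, ← mul_assoc, mul_inv_cancel₀ ha.ne']
    linarith
  · intro t ht
    have e1 := h.hg _ (mem t ht)
    have e2 := h.hg _ (mem 0 (by simp))
    have e3 := intervalIntegral.integral_add_adjacent_intervals
      (h.cy.intervalIntegrable (μ := μ) 0 (α + a * 0))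
      (h.cy.intervalIntegrable (μ := μ) (α + a * 0) (α + a * t))
    have e4 := hS.ss k hk t ht y h.cy
    rw [← hα] at e4
    rw [mul_zero, add_zero] at *
    rw [e1, e2, ← e3, e4]
    field_simp
    ring

lemma cheb_seq {x : ℕ → ℝ} {θ : ℝ} (h : ∀ k, x (k + 2) = 2 * θ * x (k + 1) - x k) (k : ℕ) :
    x (k + 1) = (Polynomial.Chebyshev.U ℝ (k : ℤ)).eval θ * x 1
      - (Polynomial.Chebyshev.U ℝ ((k : ℤ) - 1)).eval θ * x 0 := by
  induction k using Nat.twoStepInduction with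
  | zero => simp
  | one => simp [h 0]
  | more n ih1 ih2 =>
    rw [h (n + 1), ih1, ih2]
    push_cast
    have e1 := Polynomial.Chebyshev.U_add_two ℝ (n : ℤ)
    have e2 := Polynomial.Chebyshev.U_add_two ℝ ((n : ℤ) - 1)
    have e3 : (n : ℤ) + 2 - 1 = n - 1 + 2 := by ring
    have e4 : (n : ℤ) - 1 + 1 = n + 1 - 1 := by ring
    rw [e3, e1, e2, e4]
    simp
    ring

lemma Sol.transfer {κ : ℕ} {a b l : ℝ} (hκ : 2 ≤ κ) (ha : 0 < a) (hb : 0 ≤ b)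
    (hS : SS κ a b μ) (hab : (κ - 1) * (a + b) + a = 1)
    {y g : ℝ → ℝ} (h : Sol μ (κ / a * l) y g) {c d s s' θ : ℝ} (hc : c = Cy μ l 1)
    (hd : d = Cg μ l 1) (hs : s = Sy μ l 1) (hs' : s' = Sg μ l 1)
    (hθ : θ = (c + s' + b * d / a) / 2) :
    y 1 = (Polynomial.Chebyshev.U ℝ ((κ : ℤ) - 1)).eval θ * (c * y 0 + a * s * g 0)
        - (Polynomial.Chebyshev.U ℝ ((κ : ℤ) - 2)).eval θ * (y 0 - b * g 0) ∧
    g 1 = (Polynomial.Chebyshev.U ℝ ((κ : ℤ) - 1)).eval θ * (d / a * y 0 + s' * g 0)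
        - (Polynomial.Chebyshev.U ℝ ((κ : ℤ) - 2)).eval θ * g 0 := by
  have hκ0 : 0 < κ := by omega
  have i1 : (1:ℝ) ∈ Icc (0:ℝ) 1 := by simp
  have hdet : c * s' - s * d = 1 := by
    rw [hc, hs', hs, hd]; exact det_one l
  -- block step
  have hblk : ∀ k : ℕ, k < κ → y (k * (a + b) + a) = c * y (k * (a + b)) + a * s * g (k * (a + b)) ∧
      g (k * (a + b) + a) = d / a * y (k * (a + b)) + s' * g (k * (a + b)) := by
    intro k hk
    have hB := h.block hκ0 ha hb hS hab hk
    have := hB.repr i1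
    simp only [mul_one, mul_zero, add_zero] at this
    rw [← hc, ← hd, ← hs, ← hs'] at this
    refine ⟨by rw [this.1]; ring, ?_⟩
    have h2 := this.2
    field_simp
    linarith
  have hgap : ∀ k : ℕ, k + 1 < κ → g (((k + 1 : ℕ) : ℝ) * (a + b)) = g (k * (a + b) + a) ∧
      y (((k + 1 : ℕ) : ℝ) * (a + b)) = y (k * (a + b) + a) + b * g (k * (a + b) + a) := by
    intro k hk
    have hk' : (k:ℝ) + 1 ≤ κ - 1 := by
      have : (k:ℝ) + 1 + 1 ≤ κ := by exact_mod_cast hk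
      linarith
    set β := (k:ℝ) * (a + b) + a with hβ
    have hβ0 : 0 ≤ β := by positivity
    have e : ((k + 1 : ℕ) : ℝ) * (a + b) = β + b := by push_cast; rw [hβ]; ring
    have hβ1 : β + b ≤ 1 := by rw [← e]; push_cast; nlinarith
    have mem : ∀ x ∈ Icc β (β + b), x ∈ Icc (0:ℝ) 1 := fun x hx => ⟨by linarith [hx.1], by linarith [hx.2]⟩
    have mb : β ∈ Icc β (β + b) := ⟨le_rfl, by linarith⟩
    have me : β + b ∈ Icc β (β + b) := ⟨by linarith, le_rfl⟩
    have hg : ∀ x ∈ Icc β (β + b), g x = g β := by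
      intro x hx
      have e1 := h.hg x (mem x hx)
      have e2 := h.hg β (mem β mb)
      have e3 := intervalIntegral.integral_add_adjacent_intervals
        (h.cy.intervalIntegrable (μ := μ) 0 β) (h.cy.intervalIntegrable (μ := μ) β x)
      have e4 := hS.gap k hk x (by
        rw [← hβ]; refine ⟨hx.1, hx.2.trans_eq ?_⟩; rw [hβ]; ring) y
      rw [← hβ] at e4
      rw [e1, e2, ← e3, e4, add_zero]
    rw [e]
    refine ⟨hg _ me, ?_⟩
    have e1 := h.hy _ (mem _ me)
    have e2 := h.hy _ (mem _ mb)
    have e3 := intervalIntegral.integral_add_adjacent_intervals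
      (h.cg.intervalIntegrable (μ := volume) 0 β) (h.cg.intervalIntegrable (μ := volume) β (β + b))
    have e4 : ∫ t in β..(β + b), g t = ∫ t in β..(β + b), g β := by
      refine intervalIntegral.integral_congr fun t ht => hg t ?_
      rwa [uIcc_of_le (by linarith)] at ht
    rw [e4] at e3
    simp at e3
    linarith
  -- virtual sequence
  let V : ℕ → ℝ × ℝ := fun n => Nat.rec (y 0, g 0)
    (fun _ p => (c * p.1 + a * s * p.2 + b * (d / a * p.1 + s' * p.2), d / a * p.1 + s' * p.2)) n
  have hV0 : V 0 = (y 0, g 0) := rfl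
  have hV : ∀ n, V (n + 1) = (c * (V n).1 + a * s * (V n).2 + b * (d / a * (V n).1 + s' * (V n).2),
    d / a * (V n).1 + s' * (V n).2) := fun n => rfl
  have hVy : ∀ k : ℕ, k < κ → (V k).1 = y (k * (a + b)) ∧ (V k).2 = g (k * (a + b)) := by
    intro k
    induction k with
    | zero => intro _; simp [hV0]
    | succ n ih =>
      intro hn
      obtain ⟨i1, i2⟩ := ih (by omega)
      obtain ⟨b1, b2⟩ := hblk n (by omega)
      obtain ⟨g1, g2⟩ := hgap n hn
      rw [hV n, g1, g2, b1, b2, i1, i2]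
      simp
  have hr1 : ∀ k, (V (k + 2)).1 = 2 * θ * (V (k + 1)).1 - (V k).1 := by
    intro k
    rw [hV (k + 1), hV k, hθ]
    simp only
    field_simp
    linear_combination (-(V k).1 * a ^ 2) * hdet
  have hr2 : ∀ k, (V (k + 2)).2 = 2 * θ * (V (k + 1)).2 - (V k).2 := by
    intro k
    rw [hV (k + 1), hV k, hθ]
    simp only
    field_simp
    linear_combination (-(V k).2 * a ^ 2) * hdet
  obtain ⟨n, rfl⟩ : ∃ n, κ = n + 1 := ⟨κ - 1, by omega⟩
  have q1 := cheb_seq (x := fun k => (V k).1) hr1 n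
  have q2 := cheb_seq (x := fun k => (V k).2) hr2 n
  obtain ⟨b1, b2⟩ := hblk n (by omega)
  obtain ⟨v1, v2⟩ := hVy n (by omega)
  have e1 : (n:ℝ) * (a + b) + a = 1 := by push_cast at hab; linarith
  rw [e1] at b1 b2
  have w1 : (V (n + 1)).1 = y 1 + b * g 1 := by rw [hV, b1, b2, v1, v2]
  have w2 : (V (n + 1)).2 = g 1 := by rw [hV, b2, v1, v2]
  have z1 : (V 1).1 = c * y 0 + a * s * g 0 + b * (d / a * y 0 + s' * g 0) := rfl
  have z2 : (V 1).2 = d / a * y 0 + s' * g 0 := rfl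
  simp only [hV0, w1, w2, z1, z2] at q1 q2
  have i1 : ((n + 1 : ℕ) : ℤ) - 1 = n := by push_cast; ring
  have i2 : ((n + 1 : ℕ) : ℤ) - 2 = n - 1 := by push_cast; ring
  rw [i1, i2]
  exact ⟨by linear_combination q1 - b * q2, q2⟩

lemma sol_zero {y g : ℝ → ℝ} (h : Sol μ 0 y g) : y 1 = y 0 + g 0 ∧ g 1 = g 0 := by
  have i1 : (1:ℝ) ∈ Icc (0:ℝ) 1 := by simp
  exact ⟨by rw [h.vol i1]; ring, by rw [h.hg 1 i1]; ring⟩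

end
end Cant

set_option linter.unusedSectionVars false
set_option linter.unusedVariables false

namespace Cant
open Set

noncomputable def uK (κ : ℕ) (x : ℝ) : ℝ := (Polynomial.Chebyshev.U ℝ ((κ : ℤ) - 1)).eval x
noncomputable def tK (κ : ℕ) (x : ℝ) : ℝ := (Polynomial.Chebyshev.T ℝ (κ : ℤ)).eval x

lemma uK_cont (κ : ℕ) : Continuous (uK κ) := Polynomial.continuous _
lemma tK_cont (κ : ℕ) : Continuous (tK κ) := Polynomial.continuous _

/-- all the facts about the spectral data used later -/
structure Data (κ : ℕ) (a b : ℝ) (c d s θ : ℝ → ℝ) : Prop where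
  hκ : 2 ≤ κ
  ha : 0 < a
  haκ : a * κ < 1
  hb : 0 < b
  cc : Continuous c
  cd : Continuous d
  cs : Continuous s
  det : ∀ l, c l ^ 2 - s l * d l = 1
  hθ : ∀ l, θ l = c l + b / (2 * a) * d l
  hd : ∀ l, d (κ / a * l) = uK κ (θ l) * d l / a
  hth : ∀ l, θ (κ / a * l) = tK κ (θ l) + b * (1 - a) / (2 * a ^ 2) * uK κ (θ l) * d l
  c0 : c 0 = 1
  d0 : d 0 = 0
  s0 : s 0 = 1
  kern : ∀ k ∈ Icc (-1:ℝ) 1, ∃ B : ℝ × ℝ → ℝ,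
    (∀ l1 l2, d l1 ≠ 0 → d l2 ≠ 0 → (c l2 - k) / d l2 - (c l1 - k) / d l1 = (l2 - l1) * B (l1, l2)) ∧
    (∀ l, d l ≠ 0 → 0 < B (l, l)) ∧
    (∀ l1 l2, B (l1, l2) ^ 2 ≤ B (l1, l1) * B (l2, l2)) ∧
    (∀ l, d l ≠ 0 → ContinuousAt B (l, l))
  zero : ∀ z, d z = 0 → ∃ K : ℝ → ℝ, Continuous K ∧ 0 < K z ∧ ∀ l, c z * d l = (z - l) * K l

section
variable {μ : Measure ℝ} [IsProbabilityMeasure μ] [NullSingletonClass μ]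

lemma ae_zero_of_sq {y : ℝ → ℝ} (hy : Continuous y) (h : ∫ t in (0:ℝ)..1, y t * y t ∂μ ≤ 0) :
    ∀ᵐ t ∂(μ.restrict (Ioc (0:ℝ) 1)), y t = 0 := by
  rw [intervalIntegral.integral_of_le zero_le_one] at h
  have hi : Integrable (fun t => y t * y t) (μ.restrict (Ioc (0:ℝ) 1)) :=
    ((hy.fun_mul hy).integrableOn_Icc (a := 0) (b := 1)).mono_set Ioc_subset_Icc_self
  have h0 : ∫ t in Ioc (0:ℝ) 1, y t * y t ∂μ = 0 :=
    le_antisymm h (integral_nonneg fun t => mul_self_nonneg _)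
  rw [integral_eq_zero_iff_of_nonneg (fun t => mul_self_nonneg _) hi] at h0
  filter_upwards [h0] with t ht
  simpa using ht

lemma Sol.g_const {l : ℝ} {y g : ℝ → ℝ} (h : Sol μ l y g)
    (h0 : ∀ᵐ t ∂(μ.restrict (Ioc (0:ℝ) 1)), y t = 0) : ∀ x ∈ Icc (0:ℝ) 1, g x = g 0 := by
  intro x hx
  rw [h.hg x hx, intervalIntegral.integral_of_le hx.1]
  have : ∫ t in Ioc 0 x, y t ∂μ = 0 := by
    refine integral_eq_zero_of_ae ?_
    exact ae_restrict_of_ae_restrict_of_subset (Ioc_subset_Ioc_right hx.2) h0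
  rw [this]; ring

lemma Sol.y_aff {l : ℝ} {y g : ℝ → ℝ} (h : Sol μ l y g)
    (h0 : ∀ᵐ t ∂(μ.restrict (Ioc (0:ℝ) 1)), y t = 0) : ∀ x ∈ Icc (0:ℝ) 1, y x = y 0 + x * g 0 := by
  intro x hx
  rw [h.hy x hx]
  have : ∫ t in (0:ℝ)..x, g t = ∫ t in (0:ℝ)..x, g 0 := by
    refine intervalIntegral.integral_congr fun t ht => ?_
    rw [uIcc_of_le hx.1] at ht
    exact h.g_const h0 t ⟨ht.1, ht.2.trans hx.2⟩
  rw [this]; simp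

/-- a nonzero solution has positive mass, `μ` being concentrated on `[0,1]` -/
lemma Sol.pos (hμ1 : μ (Ioc (0:ℝ) 1) = 1) {l : ℝ} {y g : ℝ → ℝ} (h : Sol μ l y g)
    (hne : y 0 ≠ 0 ∨ g 0 ≠ 0) : 0 < ∫ t in (0:ℝ)..1, y t * y t ∂μ := by
  by_contra hcon
  push Not at hcon
  have h0 := ae_zero_of_sq h.cy hcon
  have ha := h.y_aff h0
  have : (μ.restrict (Ioc (0:ℝ) 1)) {t | y t ≠ 0} = 0 := h0
  rw [Measure.restrict_apply' measurableSet_Ioc] at this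
  have hsub : Ioc (0:ℝ) 1 ⊆ ({t | y t ≠ 0} ∩ Ioc (0:ℝ) 1) ∪ {-(y 0 / g 0)} := by
    intro t ht
    by_cases hy : y t = 0
    · right
      have := ha t ⟨ht.1.le, ht.2⟩
      rw [hy] at this
      have hg : g 0 ≠ 0 := by
        intro hg
        rw [hg] at this hne
        simp at this hne
        exact hne this.symm
      rw [mem_singleton_iff]
      field_simp
      linarith
    · left; exact ⟨hy, ht⟩
  have h2 := measure_mono (μ := μ) hsub
  have h3 := h2.trans (measure_union_le _ _)
  rw [this, hμ1, measure_singleton] at h3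
  simp at h3

lemma data_of {κ : ℕ} {a b : ℝ} (hκ : 2 ≤ κ) (ha : 0 < a) (haκ : a * κ < 1) (hb : 0 < b)
    (hab : (κ - 1) * (a + b) + a = 1) (hS : SS κ a b μ) (hμ1 : μ (Ioc (0:ℝ) 1) = 1) :
    Data κ a b (fun l => Cy μ l 1) (fun l => Cg μ l 1) (fun l => Sy μ l 1)
      (fun l => Cy μ l 1 + b / (2 * a) * Cg μ l 1) := by
  have hκ' : (2:ℝ) ≤ κ := by exact_mod_cast hκ
  have i1 : (1:ℝ) ∈ Icc (0:ℝ) 1 := by simp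
  have z1 := sol_zero (C_sol μ 0)
  have z2 := sol_zero (S_sol μ 0)
  simp at z1 z2
  have trC := fun l => (C_sol μ (κ / a * l)).transfer hκ ha hb.le hS hab rfl rfl rfl rfl rfl
  have trS := fun l => (S_sol μ (κ / a * l)).transfer hκ ha hb.le hS hab rfl rfl rfl rfl rfl
  simp only [Cy0, Cg0, Sy0, Sg0, mul_one, mul_zero, add_zero, sub_zero, zero_add] at trC trS
  have hτ : (1:ℝ) < κ / a := by rw [lt_div_iff₀ ha]; nlinarith
  have hτκ : (κ:ℝ) < κ / a := by rw [lt_div_iff₀ ha]; nlinarith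
  -- e = 0
  have hcs : ∀ l, Cy μ l 1 = Sg μ l 1 := by
    set Th : ℝ → ℝ := fun l => (Cy μ l 1 + Sg μ l 1 + b * Cg μ l 1 / a) / 2 with hTh
    set e : ℝ → ℝ := fun l => Cy μ l 1 - Sg μ l 1 with he
    have he1 : ∀ l, e (κ / a * l) = uK κ (Th l) * e l := by
      intro l
      simp only [he, uK, hTh]
      rw [(trC l).1, (trS l).2]
      ring
    have hcont : Continuous fun l => uK κ (Th l) := by
      have := Cy_cont (μ := μ) i1
      have := Cg_cont (μ := μ) i1
      have := Sg_cont (μ := μ) i1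
      exact (uK_cont κ).comp (by simp only [hTh]; fun_prop)
    have h0 : uK κ (Th 0) = κ := by
      simp only [hTh, z1.1, z1.2, z2.2]
      have : (1 + 1 + b * 0 / a) / 2 = (1:ℝ) := by simp
      rw [this, uK, Polynomial.Chebyshev.U_eval_one]; push_cast; ring
    obtain ⟨Z1, hZ1, hz1⟩ := C_lip (μ := μ) 1 zero_le_one
    obtain ⟨Z2, hZ2, hz2⟩ := S_lip (μ := μ) 1 zero_le_one
    have hlip : ∀ l, |l| ≤ 1 → |e l| ≤ (Z1 + Z2) * |l| := by
      intro l hl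
      have q1 := (hz1 l 0 hl (by simp) 1 i1).1
      have q2 := (hz2 l 0 hl (by simp) 1 i1).2.1
      rw [z1.1, sub_zero] at q1
      rw [z2.2, sub_zero] at q2
      have : e l = (Cy μ l 1 - 1) - (Sg μ l 1 - 1) := by simp only [he]; ring
      rw [this]
      refine (abs_sub _ _).trans ?_
      linarith
    set q := ((κ:ℝ) + κ / a) / 2 with hq
    have hqτ : q < κ / a := by rw [hq]; linarith
    have hq0 : 0 < q := by rw [hq]; linarith
    have hev : ∀ᶠ l in nhds (0:ℝ), |uK κ (Th l)| < q := by
      refine hcont.abs.continuousAt.eventually_lt_const ?_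
      simp only
      rw [h0, abs_of_pos (by linarith), hq]; linarith
    obtain ⟨δ, hδ, hball⟩ := Metric.eventually_nhds_iff.1 hev
    have hiter : ∀ n : ℕ, ∀ l, |l| < min δ 1 → |e l| ≤ (q / (κ / a)) ^ n * ((Z1 + Z2) * |l|) := by
      intro n
      induction n with
      | zero => intro l hl; simpa using hlip l (hl.le.trans (min_le_right _ _))
      | succ n ih =>
        intro l hl
        set m := l / (κ / a) with hm
        have hlm : κ / a * m = l := by rw [hm]; field_simp
        have hml : |m| = |l| / (κ / a) := by rw [hm, abs_div, abs_of_pos (by linarith : 0 < κ / a)]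
        have hml' : |m| ≤ |l| := by
          rw [hml]; exact div_le_self (abs_nonneg _) hτ.le
        have h1 := ih m (hml'.trans_lt hl)
        have h2 := @hball m (by
          rw [Real.dist_eq, sub_zero]; exact (hml'.trans_lt hl).trans_le (min_le_left _ _))
        rw [← hlm, he1, abs_mul]
        calc _ ≤ q * ((q / (κ / a)) ^ n * ((Z1 + Z2) * |m|)) := by gcongr
          _ = _ := by
            rw [hlm, hml, pow_succ]
            field_simp
    have hsmall : ∀ l, |l| < min δ 1 → e l = 0 := by
      intro l hl
      have hlim : Filter.Tendsto (fun n : ℕ => (q / (κ / a)) ^ n * ((Z1 + Z2) * |l|)) Filter.atTop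
          (nhds (0 * ((Z1 + Z2) * |l|))) :=
        (tendsto_pow_atTop_nhds_zero_of_lt_one (by positivity) (by
          rw [div_lt_one (by linarith)]; exact hqτ)).mul_const _
      rw [zero_mul] at hlim
      have := ge_of_tendsto' hlim fun n => hiter n l hl
      exact abs_nonpos_iff.1 this
    have hall : ∀ n : ℕ, ∀ l, |l| < (κ / a) ^ n * min δ 1 → e l = 0 := by
      intro n
      induction n with
      | zero => intro l hl; exact hsmall l (by simpa using hl)
      | succ n ih =>
        intro l hl
        set m := l / (κ / a) with hm
        have hlm : κ / a * m = l := by rw [hm]; field_simp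
        have hml : |m| = |l| / (κ / a) := by rw [hm, abs_div, abs_of_pos (by linarith : 0 < κ / a)]
        rw [← hlm, he1, ih m, mul_zero]
        rw [hml, div_lt_iff₀ (by linarith)]
        rw [pow_succ] at hl
        linarith
    intro l
    obtain ⟨n, hn⟩ := pow_unbounded_of_one_lt (|l| / min δ 1) hτ
    have hδ' : 0 < min δ 1 := lt_min hδ one_pos
    rw [div_lt_iff₀ hδ'] at hn
    have := hall n l hn
    simp only [he] at this
    linarith
  have hTh : ∀ l, (Cy μ l 1 + Sg μ l 1 + b * Cg μ l 1 / a) / 2 = Cy μ l 1 + b / (2 * a) * Cg μ l 1 := by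
    intro l; rw [← hcs]; field_simp; ring
  simp only [hTh] at trC trS
  have hdet : ∀ l, Cy μ l 1 ^ 2 - Sy μ l 1 * Cg μ l 1 = 1 := by
    intro l; have := det_one (μ := μ) l; rw [← hcs] at this; linarith
  refine ⟨hκ, ha, haκ, hb, Cy_cont i1, Cg_cont i1, Sy_cont i1, hdet, fun l => rfl, ?_, ?_, z1.1, z1.2,
    z2.1, ?_, ?_⟩
  · intro l
    rw [(trC l).2, uK]; ring
  · intro l
    rw [(trC l).1, (trC l).2, tK, uK]
    have := Polynomial.Chebyshev.T_eq_X_mul_U_sub_U ℝ ((κ:ℤ) - 2)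
    have i2 : (κ:ℤ) - 2 + 2 = κ := by ring
    have i3 : (κ:ℤ) - 2 + 1 = κ - 1 := by ring
    rw [i2, i3] at this
    rw [this]
    simp
    field_simp
    ring
  · -- kernels
    intro k hk
    set E : ℝ → ℝ := fun l => (1 + Cy μ l 1) / Cg μ l 1 with hE
    set A : ℝ → ℝ := fun l => (1 - Cy μ l 1) / Cg μ l 1 with hA
    have se : ∀ l, Sol μ l (fun t => E l * Cy μ l t + (-1) * Sy μ l t)
      (fun t => E l * Cg μ l t + (-1) * Sg μ l t) := fun l => (C_sol μ l).lin (S_sol μ l) _ _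
    have so : ∀ l, Sol μ l (fun t => A l * Cy μ l t + 1 * Sy μ l t)
      (fun t => A l * Cg μ l t + 1 * Sg μ l t) := fun l => (C_sol μ l).lin (S_sol μ l) _ _
    set e : ℝ → ℝ → ℝ := fun l t => E l * Cy μ l t + (-1) * Sy μ l t with he
    set o : ℝ → ℝ → ℝ := fun l t => A l * Cy μ l t + 1 * Sy μ l t with ho
    have ce : ∀ l, Continuous (e l) := fun l => (se l).cy
    have co : ∀ l, Continuous (o l) := fun l => (so l).cy
    have expand : ∀ (p q r w : ℝ) (l1 l2 : ℝ),
        ∫ t in (0:ℝ)..1, (p * Cy μ l1 t + q * Sy μ l1 t) * (r * Cy μ l2 t + w * Sy μ l2 t) ∂μ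
        = p * r * kCC μ (l1, l2) + p * w * kCS μ (l1, l2) + q * r * kCS μ (l2, l1)
          + q * w * kSS μ (l1, l2) := by
      intro p q r w l1 l2
      have c1 := (C_sol μ l1).cy
      have c2 := (C_sol μ l2).cy
      have s1 := (S_sol μ l1).cy
      have s2 := (S_sol μ l2).cy
      simp only [kCC, kCS, kSS]
      simp only [← intervalIntegral.integral_const_mul]
      rw [← intervalIntegral.integral_add, ← intervalIntegral.integral_add,
        ← intervalIntegral.integral_add]
      · congr 1; ext t; ring
      all_goals exact Continuous.intervalIntegrable (by fun_prop) _ _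
    refine ⟨fun p => (1 - k) / 4 * (∫ t in (0:ℝ)..1, e p.1 t * e p.2 t ∂μ)
      + (1 + k) / 4 * (∫ t in (0:ℝ)..1, o p.1 t * o p.2 t ∂μ), ?_, ?_, ?_, ?_⟩
    · intro l1 l2 h1 h2
      have L1 := (se l1).lagrange (se l2)
      have L2 := (so l1).lagrange (so l2)
      simp only [Cy0, Cg0, Sy0, Sg0, ← hcs] at L1 L2
      have E1 : ∀ l, Cg μ l 1 ≠ 0 → E l * Cg μ l 1 = 1 + Cy μ l 1 := fun l h => by
        simp only [hE]; field_simp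
      have A1 : ∀ l, Cg μ l 1 ≠ 0 → A l * Cg μ l 1 = 1 - Cy μ l 1 := fun l h => by
        simp only [hA]; field_simp
      have E2 : ∀ l, Cg μ l 1 ≠ 0 → E l * Cy μ l 1 + -1 * Sy μ l 1 = E l := fun l h => by
        have := hdet l
        simp only [hE]; field_simp; linarith
      have A2 : ∀ l, Cg μ l 1 ≠ 0 → A l * Cy μ l 1 + 1 * Sy μ l 1 = -A l := fun l h => by
        have := hdet l
        simp only [hA]; field_simp; linarith
      rw [E1 l1 h1, E1 l2 h2, E2 l1 h1, E2 l2 h2] at L1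
      rw [A1 l1 h1, A1 l2 h2, A2 l1 h1, A2 l2 h2] at L2
      have K1 : (l1 - l2) * (∫ t in (0:ℝ)..1, e l1 t * e l2 t ∂μ) = 2 * (E l1 - E l2) := by
        simp only [he]; rw [← L1]; ring
      have K2 : (l1 - l2) * (∫ t in (0:ℝ)..1, o l1 t * o l2 t ∂μ) = -2 * (A l1 - A l2) := by
        simp only [ho]; rw [← L2]; ring
      have m : ∀ l, Cg μ l 1 ≠ 0 → (Cy μ l 1 - k) / Cg μ l 1 = (1 - k) / 2 * E l - (1 + k) / 2 * A l :=
        fun l h => by simp only [hE, hA]; field_simp; ring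
      rw [m l1 h1, m l2 h2]
      linear_combination (1 - k) / 4 * K1 + (1 + k) / 4 * K2
    · intro l hl
      have p1 := (se l).pos hμ1 (Or.inr (by simp))
      have p2 := (so l).pos hμ1 (Or.inr (by simp))
      have q1 : 0 < ∫ t in (0:ℝ)..1, e l t * e l t ∂μ := p1
      have q2 : 0 < ∫ t in (0:ℝ)..1, o l t * o l t ∂μ := p2
      simp only
      by_cases hk1 : k < 0
      · have : 0 < (1 - k) / 4 * (∫ t in (0:ℝ)..1, e l t * e l t ∂μ) := mul_pos (by linarith) q1
        have : 0 ≤ (1 + k) / 4 * (∫ t in (0:ℝ)..1, o l t * o l t ∂μ) :=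
          mul_nonneg (by linarith [hk.1]) q2.le
        linarith
      · have : 0 ≤ (1 - k) / 4 * (∫ t in (0:ℝ)..1, e l t * e l t ∂μ) :=
          mul_nonneg (by linarith [hk.2]) q1.le
        have : 0 < (1 + k) / 4 * (∫ t in (0:ℝ)..1, o l t * o l t ∂μ) := mul_pos (by linarith) q2
        linarith
    · intro l1 l2
      simp only
      have sq : ∀ (f g : ℝ → ℝ), Continuous f → Continuous g → ∀ x : ℝ,
          0 ≤ (∫ t in (0:ℝ)..1, f t * f t ∂μ) * (x * x) + 2 * (∫ t in (0:ℝ)..1, f t * g t ∂μ) * x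
            + ∫ t in (0:ℝ)..1, g t * g t ∂μ := by
        intro f g hf hg x
        have : (∫ t in (0:ℝ)..1, f t * f t ∂μ) * (x * x) + 2 * (∫ t in (0:ℝ)..1, f t * g t ∂μ) * x
            + ∫ t in (0:ℝ)..1, g t * g t ∂μ = ∫ t in (0:ℝ)..1, (x * f t + g t) * (x * f t + g t) ∂μ := by
          have e1 : ∀ i j k : ℝ, i * (x * x) + 2 * j * x + k = (x * x) * i + (2 * x) * j + k := by
            intros; ring
          rw [e1]
          simp only [← intervalIntegral.integral_const_mul]
          rw [← intervalIntegral.integral_add, ← intervalIntegral.integral_add]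
          · congr 1; ext t; ring
          all_goals exact Continuous.intervalIntegrable (by fun_prop) _ _
        rw [this]
        exact intervalIntegral.integral_nonneg zero_le_one fun t _ => mul_self_nonneg _
      have k1 : 0 ≤ (1 - k) / 4 := by linarith [hk.2]
      have k2 : 0 ≤ (1 + k) / 4 := by linarith [hk.1]
      have q : ∀ x : ℝ, 0 ≤ ((1 - k) / 4 * (∫ t in (0:ℝ)..1, e l1 t * e l1 t ∂μ)
          + (1 + k) / 4 * (∫ t in (0:ℝ)..1, o l1 t * o l1 t ∂μ)) * (x * x)
          + (2 * ((1 - k) / 4 * (∫ t in (0:ℝ)..1, e l1 t * e l2 t ∂μ)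
          + (1 + k) / 4 * (∫ t in (0:ℝ)..1, o l1 t * o l2 t ∂μ))) * x
          + ((1 - k) / 4 * (∫ t in (0:ℝ)..1, e l2 t * e l2 t ∂μ)
          + (1 + k) / 4 * (∫ t in (0:ℝ)..1, o l2 t * o l2 t ∂μ)) := by
        intro x
        have r1 := mul_nonneg k1 (sq _ _ (ce l1) (ce l2) x)
        have r2 := mul_nonneg k2 (sq _ _ (co l1) (co l2) x)
        linarith
      have := discrim_le_zero q
      rw [discrim] at this
      linarith
    · intro l hl
      simp only [he, ho, expand]
      have c1 : ContinuousAt (fun p : ℝ × ℝ => E p.1) (l, l) := by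
        have : ContinuousAt E l := by
          simp only [hE]
          exact (continuousAt_const.add (Cy_cont i1).continuousAt).div (Cg_cont i1).continuousAt hl
        exact ContinuousAt.comp (f := Prod.fst) (x := (l, l)) this continuousAt_fst
      have c2 : ContinuousAt (fun p : ℝ × ℝ => E p.2) (l, l) := by
        have : ContinuousAt E l := by
          simp only [hE]
          exact (continuousAt_const.add (Cy_cont i1).continuousAt).div (Cg_cont i1).continuousAt hl
        exact ContinuousAt.comp (f := Prod.snd) (x := (l, l)) this continuousAt_snd
      have c3 : ContinuousAt (fun p : ℝ × ℝ => A p.1) (l, l) := by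
        have : ContinuousAt A l := by
          simp only [hA]
          exact (continuousAt_const.sub (Cy_cont i1).continuousAt).div (Cg_cont i1).continuousAt hl
        exact ContinuousAt.comp (f := Prod.fst) (x := (l, l)) this continuousAt_fst
      have c4 : ContinuousAt (fun p : ℝ × ℝ => A p.2) (l, l) := by
        have : ContinuousAt A l := by
          simp only [hA]
          exact (continuousAt_const.sub (Cy_cont i1).continuousAt).div (Cg_cont i1).continuousAt hl
        exact ContinuousAt.comp (f := Prod.snd) (x := (l, l)) this continuousAt_snd
      have k1 := (kCC_cont (μ := μ)).continuousAt (x := (l, l))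
      have k2 := (kCS_cont (μ := μ)).continuousAt (x := (l, l))
      have k3 := (kSS_cont (μ := μ)).continuousAt (x := (l, l))
      have k4 : ContinuousAt (fun p : ℝ × ℝ => kCS μ (p.2, p.1)) (l, l) :=
        ((kCS_cont (μ := μ)).comp (continuous_snd.prodMk continuous_fst)).continuousAt
      have k1' : ContinuousAt (fun p : ℝ × ℝ => kCC μ (p.1, p.2)) (l, l) := k1
      have k2' : ContinuousAt (fun p : ℝ × ℝ => kCS μ (p.1, p.2)) (l, l) := k2
      have k3' : ContinuousAt (fun p : ℝ × ℝ => kSS μ (p.1, p.2)) (l, l) := k3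
      exact (continuousAt_const.mul (((((c1.mul c2).mul k1').add
        ((c1.mul continuousAt_const).mul k2')).add ((continuousAt_const.mul c2).mul k4)).add
        (continuousAt_const.mul k3'))).add
        (continuousAt_const.mul (((((c3.mul c4).mul k1').add
        ((c3.mul continuousAt_const).mul k2')).add ((continuousAt_const.mul c4).mul k4)).add
        (continuousAt_const.mul k3')))
  · intro z hz
    refine ⟨fun l => kCC μ (z, l), kCC_cont.comp (by fun_prop),
      (C_sol μ z).pos hμ1 (Or.inl (by simp)), fun l => ?_⟩
    have := (C_sol μ z).lagrange (C_sol μ l)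
    simp only [Cy0, Cg0, hz] at this
    simp only [kCC]; rw [← this]; ring

end
end Cant

set_option linter.unusedSectionVars false
namespace Cant
open Set

lemma setup (κ : ℕ) (a b : ℝ) (hκ : 2 ≤ κ)
    (ha : 0 < a) (ha' : a < 1 / κ) (hb : b = (1 - κ * a) / (κ - 1))
    (P : ℝ → ℝ) (hP : CantorType κ a b P) (hPmono : MonotoneOn P (Set.Icc 0 1))
    (μ : Measure ℝ)
    (hμ : ∀ x ∈ Set.Icc (0 : ℝ) 1, μ (Set.Icc 0 x) = ENNReal.ofReal (P x))
    (hμc : μ (Set.Icc (0 : ℝ) 1)ᶜ = 0) :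
    ∃ c d s θ : ℝ → ℝ, Data κ a b c d s θ ∧ ∀ l, 0 < l → (IsDirichletEigen μ l ↔ s l = 0) := by
  obtain ⟨hPc, hP0, hP1, hgap, hss⟩ := hP
  have hκ' : (2:ℝ) ≤ κ := by exact_mod_cast hκ
  have haκ : a * κ < 1 := by rwa [lt_div_iff₀ (by linarith)] at ha'
  have hb0 : 0 < b := by rw [hb]; apply div_pos <;> linarith
  have hab : ((κ:ℝ) - 1) * (a + b) + a = 1 := by
    have : (κ:ℝ) - 1 ≠ 0 := by linarith
    rw [hb]; field_simp; ring
  have i1 : (1:ℝ) ∈ Icc (0:ℝ) 1 := by simp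
  have i0 : (0:ℝ) ∈ Icc (0:ℝ) 1 := by simp
  have hm1 : μ (Icc (0:ℝ) 1) = 1 := by rw [hμ 1 i1, hP1]; simp
  have hprob : IsProbabilityMeasure μ := by
    constructor
    rw [← measure_add_measure_compl (measurableSet_Icc (a := (0:ℝ)) (b := 1)), hm1, hμc, add_zero]
  have hP0' : ∀ x ∈ Icc (0:ℝ) 1, 0 ≤ P x := fun x hx => by
    rw [← hP0]; exact hPmono i0 hx hx.1
  have hI : ∀ x y, 0 ≤ x → x ≤ y → y ≤ 1 → μ (Ioc x y) = ENNReal.ofReal (P y - P x) := by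
    intro x y h0 hxy h1
    have e : Ioc x y = Icc 0 y \ Icc 0 x := by
      ext t; simp only [mem_Ioc, mem_diff, mem_Icc, not_and, not_le]
      constructor
      · rintro ⟨h2, h3⟩; exact ⟨⟨by linarith, h3⟩, fun _ => h2⟩
      · rintro ⟨⟨h2, h3⟩, h4⟩; exact ⟨h4 h2, h3⟩
    rw [e, measure_diff (Icc_subset_Icc_right hxy) measurableSet_Icc.nullMeasurableSet
      (measure_ne_top _ _), hμ y ⟨by linarith, h1⟩, hμ x ⟨h0, by linarith⟩,
      ENNReal.ofReal_sub _ (hP0' x ⟨h0, by linarith⟩)]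
  have hna : NullSingletonClass μ := by
    constructor
    intro x
    by_cases hx : x ∈ Icc (0:ℝ) 1
    · rcases hx.1.eq_or_lt with h0 | h0
      · have := hμ 0 i0
        rw [hP0] at this
        rw [← h0]; simpa using this
      · have hle : ∀ y ∈ Ico 0 x, (μ {x}).toReal ≤ P x - P y := by
          intro y hy
          have hsub : ({x} : Set ℝ) ⊆ Ioc y x := by
            intro t ht; rw [mem_singleton_iff] at ht; rw [ht]; exact ⟨hy.2, le_rfl⟩
          have h1 := measure_mono (μ := μ) hsub
          rw [hI y x hy.1 hy.2.le hx.2] at h1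
          exact ENNReal.toReal_le_of_le_ofReal
            (sub_nonneg.2 (hPmono ⟨hy.1, hy.2.le.trans hx.2⟩ hx hy.2.le)) h1
        have hne : (nhdsWithin x (Ico 0 x)).NeBot := by
          rw [← mem_closure_iff_nhdsWithin_neBot, closure_Ico h0.ne]
          exact ⟨h0.le, le_rfl⟩
        have hlim : Filter.Tendsto (fun y => P x - P y) (nhdsWithin x (Ico 0 x)) (nhds (P x - P x)) := by
          refine tendsto_const_nhds.sub ?_
          exact ((hPc x hx).mono (fun t ht => ⟨ht.1, ht.2.le.trans hx.2⟩))
        have h3 : (μ {x}).toReal ≤ P x - P x :=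
          ge_of_tendsto hlim (Filter.eventually_of_mem self_mem_nhdsWithin hle)
        rw [sub_self] at h3
        have h4 : (μ {x}).toReal = 0 := le_antisymm h3 ENNReal.toReal_nonneg
        rcases (ENNReal.toReal_eq_zero_iff _).1 h4 with h5 | h5
        · exact h5
        · exact absurd h5 (measure_ne_top _ _)
    · exact measure_mono_null (by intro t ht; rw [mem_singleton_iff] at ht; rw [ht]; exact hx) hμc
  have hS : SS κ a b μ := by
    constructor
    · intro k hk t ht f hf
      obtain ⟨c, hc⟩ := hss k (by omega)
      have hk' : (k:ℝ) ≤ κ - 1 := by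
        have : (k:ℝ) + 1 ≤ κ := by exact_mod_cast hk
        linarith
      exact ss_of (by omega) ha (by positivity) (by nlinarith) hI hc ht hf
    · intro k hk x hx f
      obtain ⟨c, hc⟩ := hgap (k + 1) (by omega) (by omega)
      push_cast at hc
      rw [add_sub_cancel_right] at hc
      have hk' : (k:ℝ) + 1 ≤ κ - 1 := by
        have : (k:ℝ) + 1 + 1 ≤ κ := by exact_mod_cast hk
        linarith
      set β := (k:ℝ) * (a + b) + a with hβ
      have hβ0 : 0 ≤ β := by positivity
      have hβ1 : ((k:ℝ) + 1) * (a + b) ≤ 1 := by nlinarith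
      have hlt : β < ((k:ℝ) + 1) * (a + b) := by rw [hβ]; linarith
      have hEq : EqOn P (fun _ => c) (Icc β (((k:ℝ) + 1) * (a + b))) := by
        refine EqOn.of_subset_closure (s := Ioo β (((k:ℝ) + 1) * (a + b))) hc
          (hPc.mono (Icc_subset_Icc hβ0 hβ1)) continuousOn_const Ioo_subset_Icc_self ?_
        rw [closure_Ioo hlt.ne]
      have h0 : μ (Ioc β x) = 0 := by
        rw [hI β x hβ0 hx.1 (hx.2.trans hβ1), hEq hx, hEq ⟨le_rfl, hlt.le⟩]; simp
      rw [intervalIntegral.integral_of_le hx.1, Measure.restrict_eq_zero.2 h0, integral_zero_measure]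
  have hμ1 : μ (Ioc (0:ℝ) 1) = 1 := by
    rw [hI 0 1 le_rfl zero_le_one le_rfl, hP1, hP0]; simp
  refine ⟨_, _, _, _, data_of hκ ha haκ hb0 hab hS hμ1, ?_⟩
  intro l hl
  constructor
  · rintro ⟨y, g, cy, cg, ⟨x, hx, hyx⟩, hy, hg, y0, y1⟩
    have ey : ∀ t ∈ Icc (0:ℝ) 1, IccExtend zero_le_one ((Icc (0:ℝ) 1).restrict y) t = y t := fun t ht => by
      rw [IccExtend_of_mem _ _ ht]; rfl
    have eg : ∀ t ∈ Icc (0:ℝ) 1, IccExtend zero_le_one ((Icc (0:ℝ) 1).restrict g) t = g t := fun t ht => by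
      rw [IccExtend_of_mem _ _ ht]; rfl
    have hsol : Sol μ l (IccExtend zero_le_one ((Icc (0:ℝ) 1).restrict y))
        (IccExtend zero_le_one ((Icc (0:ℝ) 1).restrict g)) := by
      refine ⟨cy.restrict.Icc_extend', cg.restrict.Icc_extend', ?_, ?_⟩
      · intro t ht
        rw [ey t ht, ey 0 i0, hy t ht]
        congr 1
        refine intervalIntegral.integral_congr fun w hw => ?_
        rw [uIcc_of_le ht.1] at hw
        rw [eg w ⟨hw.1, hw.2.trans ht.2⟩]
      · intro t ht
        rw [eg t ht, eg 0 i0, hg t ht, intervalIntegral.integral_of_le ht.1,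
          ← integral_Icc_eq_integral_Ioc]
        congr 2
        refine setIntegral_congr_fun measurableSet_Icc fun w hw => ?_
        rw [ey w ⟨hw.1, hw.2.trans ht.2⟩]
    have r1 := (hsol.repr hx).1
    have r2 := (hsol.repr i1).1
    rw [ey 0 i0, y0, ey x hx] at r1
    rw [ey 0 i0, y0, ey 1 i1, y1] at r2
    simp only [zero_mul, zero_add] at r1 r2
    rcases mul_eq_zero.1 r2.symm with h | h
    · rw [h, zero_mul] at r1; exact absurd r1 hyx
    · exact h
  · intro h
    have hs := S_sol μ l
    refine ⟨Sy μ l, Sg μ l, hs.cy.continuousOn, hs.cg.continuousOn, ?_, hs.hy, ?_, by simp, h⟩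
    · by_contra hcon
      push Not at hcon
      have := hs.pos hμ1 (Or.inr (by simp))
      have e : ∫ t in (0:ℝ)..1, Sy μ l t * Sy μ l t ∂μ = ∫ t in (0:ℝ)..1, (0:ℝ) ∂μ := by
        refine intervalIntegral.integral_congr fun w hw => ?_
        rw [uIcc_of_le zero_le_one] at hw
        simp only [hcon w hw, mul_zero]
      rw [e] at this
      simp at this
    · intro x hx
      rw [hs.hg x hx, intervalIntegral.integral_of_le hx.1, ← integral_Icc_eq_integral_Ioc]

end Cant

set_option linter.unusedSectionVars false
set_option linter.unusedVariables false
namespace Cant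
open Set

lemma tK_zero (x : ℝ) : tK 0 x = 1 := by simp [tK]
lemma uK_zero (x : ℝ) : uK 0 x = 0 := by simp [uK]
lemma uK_succ (k : ℕ) (x : ℝ) : uK (k+1) x = x * uK k x + tK k x := by
  have h := congrArg (Polynomial.eval x) (Polynomial.Chebyshev.U_eq_X_mul_U_add_T ℝ ((k:ℤ) - 1))
  simp only [sub_add_cancel, Polynomial.eval_add, Polynomial.eval_mul, Polynomial.eval_X] at h
  unfold uK tK
  rw [← h]; push_cast; simp
lemma tK_succ (k : ℕ) (x : ℝ) : tK (k+1) x = x * tK k x - (1 - x^2) * uK k x := by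
  have h := congrArg (Polynomial.eval x) (Polynomial.Chebyshev.T_eq_X_mul_T_sub_pol_U ℝ ((k:ℤ) - 1))
  simp only [sub_add_cancel, Polynomial.eval_add, Polynomial.eval_mul, Polynomial.eval_X,
    Polynomial.eval_sub, Polynomial.eval_pow, Polynomial.eval_one] at h
  unfold uK tK
  rw [← h]; push_cast; congr 2; ring

lemma pell (k : ℕ) (x : ℝ) : 1 - tK k x ^ 2 = uK k x ^ 2 * (1 - x^2) := by
  induction k with
  | zero => simp [tK_zero, uK_zero]
  | succ k ih => rw [tK_succ, uK_succ]; linear_combination ih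

lemma par (k : ℕ) (x ε : ℝ) (hε : ε^2 = 1) :
    tK k (ε*x) = ε^k * tK k x ∧ uK k (ε*x) = ε^k * ε * uK k x := by
  induction k with
  | zero => simp [tK_zero, uK_zero]
  | succ k ih =>
    obtain ⟨h1, h2⟩ := ih
    rw [tK_succ, uK_succ, h1, h2, tK_succ, uK_succ]
    constructor
    · linear_combination (-ε^k*(ε * uK k x) * (-x^2)) * hε
    · linear_combination (-ε^k*tK k x) * hε

lemma uK_le (k : ℕ) (x : ℝ) (hx : |x| ≤ 1) : |tK k x| ≤ 1 ∧ |uK k x| ≤ k := by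
  have ht : ∀ k, |tK k x| ≤ 1 := by
    intro k
    have h := pell k x
    have : x^2 ≤ 1 := by rw [← sq_abs]; nlinarith [abs_nonneg x]
    apply abs_le_one_iff_mul_self_le_one.2
    nlinarith [mul_nonneg (sq_nonneg (uK k x)) (sub_nonneg.2 this)]
  refine ⟨ht k, ?_⟩
  induction k with
  | zero => simp [uK_zero]
  | succ k ih =>
    rw [uK_succ]
    calc _ ≤ |x * uK k x| + |tK k x| := abs_add_le _ _
      _ ≤ 1 * k + 1 := by
        rw [abs_mul]
        have := ht k
        gcongr
      _ = _ := by push_cast; ring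

lemma TU_ge (k : ℕ) (x : ℝ) (hx : 1 ≤ x) : 1 ≤ tK k x ∧ 0 ≤ uK k x ∧ (1 ≤ k → 1 ≤ uK k x) := by
  induction k with
  | zero => simp [tK_zero, uK_zero]
  | succ k ih =>
    obtain ⟨h1, h2, h3⟩ := ih
    rw [tK_succ, uK_succ]
    have : 0 ≤ (x^2 - 1) * uK k x := mul_nonneg (by nlinarith) h2
    have : 0 ≤ x * uK k x := mul_nonneg (by linarith) h2
    refine ⟨by nlinarith, by linarith, fun _ => by linarith⟩

lemma TU_cos (k : ℕ) (φ : ℝ) : tK k (Real.cos φ) = Real.cos (k*φ) ∧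
    uK k (Real.cos φ) * Real.sin φ = Real.sin (k*φ) := by
  induction k with
  | zero => simp [tK_zero, uK_zero]
  | succ k ih =>
    obtain ⟨h1, h2⟩ := ih
    rw [tK_succ, uK_succ]
    push_cast
    rw [add_mul, one_mul, Real.cos_add, Real.sin_add, ← h1, ← h2]
    have := Real.sin_sq_add_cos_sq φ
    constructor
    · linear_combination (uK k (Real.cos φ)) * this
    · ring

lemma exists_eps (x : ℝ) : ∃ ε : ℝ, ε^2 = 1 ∧ x = ε * |x| := by
  rcases le_total 0 x with h | h
  · exact ⟨1, by norm_num, by rw [abs_of_nonneg h]; ring⟩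
  · exact ⟨-1, by norm_num, by rw [abs_of_nonpos h]; ring⟩

lemma uK_zero_lt {k : ℕ} (hk : 1 ≤ k) {x : ℝ} (hx : uK k x = 0) : |x| < 1 := by
  by_contra h
  push Not at h
  obtain ⟨ε, h1, h2⟩ := exists_eps x
  rw [h2, (par k _ ε h1).2] at hx
  have := (TU_ge k _ h).2.2 hk
  have hε : ε ≠ 0 := by rintro rfl; norm_num at h1
  have : uK k |x| ≠ 0 := by linarith
  simp [this, hε] at hx

lemma uK_zeros_card {k : ℕ} (hk : 1 ≤ k) : ∃ S : Finset ℝ, S.card ≤ k - 1 ∧ ∀ x, uK k x = 0 → x ∈ S := by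
  classical
  refine ⟨(Polynomial.Chebyshev.U ℝ ((k : ℤ) - 1)).roots.toFinset, ?_, ?_⟩
  · refine (Multiset.toFinset_card_le _).trans ((Polynomial.card_roots' _).trans ?_)
    rw [Polynomial.Chebyshev.natDegree_U]
    simp
  · intro x hx
    rw [Multiset.mem_toFinset, Polynomial.mem_roots']
    refine ⟨?_, hx⟩
    rw [Ne, Polynomial.Chebyshev.U_eq_zero_iff]
    omega

lemma eps_cases {ε : ℝ} (h : ε^2 = 1) : ε = 1 ∨ ε = -1 := by
  have : (ε - 1) * (ε + 1) = 0 := by linear_combination h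
  rcases mul_eq_zero.1 this with h | h
  · left; linarith
  · right; linarith
end Cant

set_option linter.unusedSectionVars false
set_option linter.unusedVariables false
namespace Cant
open Set

variable {κ : ℕ} {a b : ℝ} {c d s θ : ℝ → ℝ}

lemma Data.kpos (H : Data κ a b c d s θ) : (2:ℝ) ≤ κ := by exact_mod_cast H.hκ
lemma Data.a_lt (H : Data κ a b c d s θ) : a < 1/2 := by nlinarith [H.kpos, H.haκ, H.ha]
lemma Data.tau (H : Data κ a b c d s θ) : 1 < (κ:ℝ)/a := by
  rw [lt_div_iff₀ H.ha]; nlinarith [H.kpos, H.a_lt]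
lemma Data.tau0 (H : Data κ a b c d s θ) : 0 < (κ:ℝ)/a := by linarith [H.tau]
lemma Data.Cpos (H : Data κ a b c d s θ) : 0 < b * (1 - a) / (2 * a ^ 2) :=
  div_pos (mul_pos H.hb (by linarith [H.a_lt])) (by have := H.ha; positivity)
lemma Data.hpos (H : Data κ a b c d s θ) : 0 < b / (2 * a) :=
  div_pos H.hb (by have := H.ha; positivity)
lemma Data.ct (H : Data κ a b c d s θ) : Continuous θ := by
  have : θ = fun l => c l + b / (2 * a) * d l := funext H.hθ
  rw [this]
  exact H.cc.add (continuous_const.mul H.cd)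
lemma Data.hd' (H : Data κ a b c d s θ) (l) : a * d (κ/a*l) = uK κ (θ l) * d l := by
  rw [H.hd]; have := H.ha.ne'; field_simp
lemma Data.hth' (H : Data κ a b c d s θ) (l) :
    θ (κ/a*l) = tK κ (θ l) + b * (1 - a) / (2 * a ^ 2) * (a * d (κ/a*l)) := by
  rw [H.hth, H.hd']; ring

lemma Data.kern2 (H : Data κ a b c d s θ) (k : ℝ) (hk : k ∈ Icc (-1:ℝ) 1) :
    ∃ N : ℝ → ℝ, (∀ l, d l ≠ 0 → 0 < N l ∧ ContinuousAt N l ∧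
      HasDerivAt (fun l => (θ l - k) / d l) (N l) l) ∧
      ∀ l1 l2, d l1 ≠ 0 → d l2 ≠ 0 →
        ((θ l2 - k) / d l2 - (θ l1 - k) / d l1)^2 ≤ (l2 - l1)^2 * (N l1 * N l2) := by
  obtain ⟨B, h1, h2, h3, h4⟩ := H.kern k hk
  have e : ∀ l, d l ≠ 0 → (θ l - k) / d l = (c l - k) / d l + b / (2*a) := by
    intro l hl
    rw [H.hθ]; field_simp; ring
  have e2 : ∀ l1 l2, d l1 ≠ 0 → d l2 ≠ 0 →
      (θ l2 - k) / d l2 - (θ l1 - k) / d l1 = (l2 - l1) * B (l1, l2) := by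
    intro l1 l2 g1 g2
    rw [e l1 g1, e l2 g2, ← h1 l1 l2 g1 g2]; ring
  refine ⟨fun l => B (l,l), fun l hl => ⟨h2 l hl, ?_, ?_⟩, ?_⟩
  · exact ContinuousAt.comp (f := fun l : ℝ => (l,l)) (g := B) (h4 l hl) (by fun_prop)
  · rw [hasDerivAt_iff_tendsto_slope]
    have hc : Filter.Tendsto (fun t => B (l, t)) (nhdsWithin l {l}ᶜ) (nhds (B (l,l))) := by
      have : ContinuousAt (fun t => B (l,t)) l :=
        ContinuousAt.comp (f := fun t : ℝ => (l,t)) (g := B) (h4 l hl) (by fun_prop)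
      exact this.tendsto.mono_left nhdsWithin_le_nhds
    refine hc.congr' ?_
    have : ∀ᶠ t in nhdsWithin l {l}ᶜ, d t ≠ 0 :=
      (H.cd.continuousAt.eventually_ne hl).filter_mono nhdsWithin_le_nhds
    filter_upwards [this, self_mem_nhdsWithin] with t ht htl
    rw [slope_def_field, e2 l t hl ht]
    have : t - l ≠ 0 := sub_ne_zero.2 htl
    field_simp
  · intro l1 l2 g1 g2
    rw [e2 l1 l2 g1 g2, mul_pow]
    exact mul_le_mul_of_nonneg_left (h3 l1 l2) (sq_nonneg _)

lemma Data.mono (H : Data κ a b c d s θ) (k : ℝ) (hk : k ∈ Icc (-1:ℝ) 1) {S : Set ℝ}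
    (hS : Convex ℝ S) (hd : ∀ l ∈ S, d l ≠ 0) :
    StrictMonoOn (fun l => (θ l - k) / d l) S := by
  obtain ⟨N, h1, -⟩ := H.kern2 k hk
  refine strictMonoOn_of_deriv_pos hS ?_ ?_
  · intro l hl
    exact (h1 l (hd l hl)).2.2.continuousAt.continuousWithinAt
  · intro l hl
    have := h1 l (hd l (interior_subset hl))
    rw [this.2.2.deriv]; exact this.1

lemma Data.th_inj (H : Data κ a b c d s θ) (k : ℝ) (hk : k ∈ Icc (-1:ℝ) 1) {S : Set ℝ}
    (hS : Convex ℝ S) (hd : ∀ l ∈ S, d l ≠ 0) {x y : ℝ} (hx : x ∈ S) (hy : y ∈ S)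
    (ex : θ x = k) (ey : θ y = k) : x = y := by
  apply (H.mono k hk hS hd).injOn hx hy
  simp [ex, ey]

lemma Data.c_inj (H : Data κ a b c d s θ) (k : ℝ) (hk : k ∈ Icc (-1:ℝ) 1) {S : Set ℝ}
    (hS : Convex ℝ S) (hd : ∀ l ∈ S, d l ≠ 0) {x y : ℝ} (hx : x ∈ S) (hy : y ∈ S)
    (ex : c x = k) (ey : c y = k) : x = y := by
  apply (H.mono k hk hS hd).injOn hx hy
  have := hd x hx
  have := hd y hy
  simp only [H.hθ, ex, ey]
  field_simp
  ring

lemma Data.csq (H : Data κ a b c d s θ) {z : ℝ} (hz : d z = 0) : c z ^ 2 = 1 := by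
  have := H.det z; rw [hz] at this; linarith

lemma Data.tz (H : Data κ a b c d s θ) {z : ℝ} (hz : d z = 0) : θ z = c z := by
  rw [H.hθ, hz]; ring

lemma Data.near (H : Data κ a b c d s θ) {z : ℝ} (hz : d z = 0) :
    ∃ δ > 0, (∀ l ∈ Ioo z (z+δ), c z * d l < 0) ∧ ∀ l ∈ Ioo (z-δ) z, 0 < c z * d l := by
  obtain ⟨K, hK, h0, hh⟩ := H.zero z hz
  have : ∀ᶠ l in nhds z, 0 < K l := hK.continuousAt.eventually (lt_mem_nhds h0)
  obtain ⟨δ, hδ, h⟩ := Metric.eventually_nhds_iff.1 this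
  refine ⟨δ, hδ, fun l hl => ?_, fun l hl => ?_⟩
  · rw [hh]
    have := @h l (by rw [Real.dist_eq, abs_lt]; constructor <;> linarith [hl.1, hl.2])
    nlinarith [hl.1]
  · rw [hh]
    have := @h l (by rw [Real.dist_eq, abs_lt]; constructor <;> linarith [hl.1, hl.2])
    nlinarith [hl.2]

lemma scale_ind {τ : ℝ} (hτ : 1 < τ) (p : ℝ → Prop) {δ : ℝ} (hδ : 0 < δ) (h0 : ∀ l, 0 < l → l < δ → p l)
    (h1 : ∀ l, 0 < l → p l → p (τ * l)) : ∀ l, 0 < l → p l := by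
  have key : ∀ n : ℕ, ∀ l, 0 < l → l < τ^n * δ → p l := by
    intro n
    induction n with
    | zero => intro l hl hl2; exact h0 l hl (by simpa using hl2)
    | succ n ih =>
      intro l hl hl2
      have e : l = τ * (l/τ) := by field_simp
      rw [e]
      have : 0 < l/τ := by positivity
      apply h1 _ this (ih _ this _)
      rw [div_lt_iff₀ (by linarith)]
      rw [pow_succ] at hl2; nlinarith
  intro l hl
  obtain ⟨n, hn⟩ := pow_unbounded_of_one_lt (l/δ) hτ
  exact key n l hl (by rwa [div_lt_iff₀ hδ] at hn)

lemma Data.small (H : Data κ a b c d s θ) : ∃ δ > 0, ∀ l, 0 < l → l < δ →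
    d l < 0 ∧ |θ l| ≤ 1 ∧ 1 - θ l ^ 2 ≤ 2 * (b/(2*a) + 1) * |d l| := by
  obtain ⟨δ1, hδ1, hn, -⟩ := H.near H.d0
  have e1 : ∀ᶠ l in nhds (0:ℝ), 0 < s l := H.cs.continuousAt.eventually (lt_mem_nhds (by rw [H.s0]; norm_num))
  have e2 : ∀ᶠ l in nhds (0:ℝ), 0 < c l := H.cc.continuousAt.eventually (lt_mem_nhds (by rw [H.c0]; norm_num))
  have e3 : ∀ᶠ l in nhds (0:ℝ), s l - c l < 1 := (H.cs.sub H.cc).continuousAt.eventually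
    (gt_mem_nhds (by simp [H.s0, H.c0]))
  have e4 : ∀ᶠ l in nhds (0:ℝ), 0 < θ l := H.ct.continuousAt.eventually
    (lt_mem_nhds (by rw [H.tz H.d0, H.c0]; norm_num))
  obtain ⟨δ, hδ, h⟩ := Metric.eventually_nhds_iff.1 (e1.and (e2.and (e3.and e4)))
  refine ⟨min δ δ1, lt_min hδ hδ1, fun l hl hl2 => ?_⟩
  obtain ⟨g1, g2, g3, g4⟩ := @h l (by rw [Real.dist_eq, sub_zero, abs_of_pos hl]; exact hl2.trans_le (min_le_left _ _))
  have hdl := hn l ⟨hl, by linarith [min_le_right δ δ1]⟩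
  rw [H.c0, one_mul] at hdl
  have hdet := H.det l
  have ht := H.hθ l
  have hh := H.hpos
  set hc := b/(2*a)
  set q := s l / (c l + 1) with hq
  have hq0 : 0 < q := by positivity
  have hq1 : q ≤ 1 := by rw [hq, div_le_one (by linarith)]; linarith
  have eq : 1 - θ l = -d l * (hc + q) := by
    have : q * (c l + 1) = s l := by rw [hq]; field_simp
    have h2 : (c l + 1) * (1 - θ l) = (c l + 1) * (-d l * (hc + q)) := by
      rw [ht]; linear_combination -hdet + d l * this
    exact mul_left_cancel₀ (by linarith) h2
  have p1 : 0 < -d l * (hc+q) := mul_pos (by linarith) (by linarith)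
  refine ⟨hdl, by rw [abs_le]; constructor <;> linarith, ?_⟩
  rw [abs_of_neg hdl]
  have p2 : -d l * (hc+q) ≤ -d l * (hc+1) := mul_le_mul_of_nonneg_left (by linarith) (by linarith)
  nlinarith

def Gap (d θ : ℝ → ℝ) (l : ℝ) : Prop := 1 ≤ |θ l| ∧ 0 < θ l * d l

lemma Data.gap_step (H : Data κ a b c d s θ) {l : ℝ} (hl : Gap d θ l) :
    Gap d θ (κ/a*l) ∧ 1 < |θ (κ/a*l)| := by
  obtain ⟨h1, h2⟩ := hl
  obtain ⟨ε, he, hx⟩ := exists_eps (θ l)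
  have hε : ε ≠ 0 := by rintro rfl; norm_num at he
  obtain ⟨g1, -, g3⟩ := TU_ge κ _ h1
  have g3 := g3 (by linarith [H.hκ])
  have hed : 0 < ε * d l := by
    rw [hx, mul_right_comm] at h2
    exact pos_of_mul_pos_left h2 (abs_nonneg _)
  have hp := par κ |θ l| ε he
  rw [← hx] at hp
  have hk : (ε^κ)^2 = 1 := by rw [← pow_mul, mul_comm, pow_mul, he, one_pow]
  have ha := H.ha
  have hC := H.Cpos
  have d1 : d (κ/a*l) = ε^κ * (uK κ |θ l| * (ε * d l) / a) := by rw [H.hd, hp.2]; ring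
  set W := uK κ |θ l| * (ε * d l) / a with hW
  have W0 : 0 < W := by positivity
  have t1 : θ (κ/a*l) = ε^κ * (tK κ |θ l| + b * (1 - a) / (2 * a ^ 2) * (a * W)) := by
    rw [H.hth', hp.1, d1]; ring
  set V := tK κ |θ l| + b * (1 - a) / (2 * a ^ 2) * (a * W)
  have V1 : 1 < V := by
    have : 0 < b * (1 - a) / (2 * a ^ 2) * (a * W) := by positivity
    linarith
  have ab : |ε^κ| = 1 := by rw [← sq_eq_sq₀ (abs_nonneg _) (by norm_num), sq_abs, hk]; norm_num
  have : 1 < |θ (κ/a*l)| := by rw [t1, abs_mul, ab, one_mul]; exact V1.trans_le (le_abs_self _)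
  refine ⟨⟨this.le, ?_⟩, this⟩
  rw [t1, d1]
  have : ε ^ κ * V * (ε ^ κ * W) = V * W := by linear_combination V * W * hk
  rw [this]; exact mul_pos (by linarith) W0

lemma Data.gap_iter (H : Data κ a b c d s θ) {l : ℝ} (hl : Gap d θ l) (j : ℕ) :
    Gap d θ ((κ/a)^j*l) := by
  induction j with
  | zero => simpa using hl
  | succ j ih => rw [pow_succ', mul_assoc]; exact (H.gap_step ih).1

lemma Gap.ne {l : ℝ} (hl : Gap d θ l) : d l ≠ 0 := fun h => by
  have := hl.2; simp [h] at this

lemma Data.R (H : Data κ a b c d s θ) : ∀ l, 0 < l → |θ l| ≤ 1 ∨ 0 < θ l * d l := by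
  obtain ⟨δ, hδ, hs⟩ := H.small
  refine scale_ind H.tau _ hδ (fun l h1 h2 => Or.inl (hs l h1 h2).2.1) ?_
  intro l hl hR
  by_cases h1 : |θ l| ≤ 1
  · by_cases h2 : |θ (κ/a*l)| ≤ 1
    · exact Or.inl h2
    · right
      have hT := abs_le.1 (uK_le κ _ h1).1
      have hC := mul_pos H.Cpos H.ha
      have e := H.hth' l
      rw [← mul_assoc] at e
      rw [abs_le, not_and_or] at h2
      rcases h2 with h2 | h2
      · apply mul_pos_of_neg_of_neg (by linarith)
        by_contra h3
        push Not at h3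
        have := mul_nonneg hC.le h3
        linarith
      · apply mul_pos (by linarith)
        by_contra h3
        push Not at h3
        have := mul_nonpos_of_nonneg_of_nonpos hC.le h3
        linarith
  · exact Or.inr (H.gap_step ⟨(not_le.1 h1).le, hR.resolve_left h1⟩).1.2

lemma Data.V (H : Data κ a b c d s θ) : ∃ K0 > 0, ∀ l, 0 < l → 1 - θ l ^ 2 ≤ K0 * |d l| := by
  obtain ⟨δ, hδ, hs⟩ := H.small
  have hh := H.hpos
  have hC := H.Cpos
  have ha := H.ha
  have haκ := H.haκ
  set h := b/(2*a)
  set C := b * (1 - a) / (2 * a ^ 2)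
  set K0 := max (2*(h+1)) (2*a*C/(1-a*κ)) with hK0
  have hK : 0 < K0 := lt_of_lt_of_le (by positivity) (le_max_left _ _)
  have hK2 : 2*a*C ≤ K0 * (1-a*κ) := by
    rw [← div_le_iff₀ (by linarith)]; exact le_max_right _ _
  refine ⟨K0, hK, ?_⟩
  refine scale_ind H.tau _ hδ (fun l h1 h2 => (hs l h1 h2).2.2.trans ?_) ?_
  · exact mul_le_mul_of_nonneg_right (le_max_left _ _) (abs_nonneg _)
  intro l hl hv
  by_cases h1 : |θ l| ≤ 1
  · obtain ⟨hT, hU⟩ := uK_le κ _ h1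
    have e := H.hth' l
    have e2 : |uK κ (θ l)| * |d l| = a * |d (κ/a*l)| := by
      rw [← abs_mul, ← H.hd', abs_mul, abs_of_pos ha]
    have p := pell κ (θ l)
    set d1 := d (κ/a*l)
    set T := tK κ (θ l)
    set U := uK κ (θ l)
    change θ (κ/a*l) = T + C * (a * d1) at e
    have i1 : U^2 * (1 - θ l^2) ≤ κ * K0 * (a * |d1|) := by
      calc U^2 * (1 - θ l^2) ≤ U^2 * (K0 * |d l|) := mul_le_mul_of_nonneg_left hv (sq_nonneg _)
        _ = |U| * (K0 * (|U| * |d l|)) := by rw [← sq_abs U]; ring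
        _ ≤ κ * (K0 * (|U| * |d l|)) := mul_le_mul_of_nonneg_right hU (by positivity)
        _ = _ := by rw [e2]; ring
    have i2 : -(T * d1) ≤ |d1| := by
      calc -(T*d1) ≤ |T * d1| := neg_le_abs _
        _ = |T| * |d1| := abs_mul _ _
        _ ≤ 1 * |d1| := mul_le_mul_of_nonneg_right hT (abs_nonneg _)
        _ = _ := one_mul _
    have i3 := mul_le_mul_of_nonneg_left i2 (by positivity : 0 ≤ 2 * C * a)
    have i4 := mul_le_mul_of_nonneg_right hK2 (abs_nonneg d1)
    rw [e]
    nlinarith [sq_nonneg (C * (a*d1))]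
  · have := (H.gap_step ⟨(not_le.1 h1).le, (H.R l hl).resolve_left h1⟩).2
    have h2 : 1 ≤ θ (κ/a*l)^2 := by rw [← sq_abs]; nlinarith
    have : 0 ≤ K0 * |d (κ/a*l)| := by positivity
    linarith
end Cant

set_option linter.unusedSectionVars false
set_option linter.unusedVariables false
namespace Cant
open Set

variable {κ : ℕ} {a b : ℝ} {c d s θ F : ℝ → ℝ}

noncomputable def nn (s : ℝ → ℝ) (α β : ℝ) : ℕ := ({l | 0 < l ∧ s l = 0} ∩ Ioc α β).ncard

structure FD (κ : ℕ) (a : ℝ) (s F : ℝ → ℝ) : Prop where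
  fin : ∀ α β : ℝ, ({l | 0 < l ∧ s l = 0} ∩ Ioc α β).Finite
  lim : ∀ l, 0 ≤ l → Filter.Tendsto (fun k : ℕ => (nn s 0 (((κ:ℝ)/a)^k*l) : ℝ)/(κ:ℝ)^k)
    Filter.atTop (nhds (F l))

lemma FD.add (G : FD κ a s F) {α β γ : ℝ} (h1 : α ≤ β) (h2 : β ≤ γ) :
    nn s α γ = nn s α β + nn s β γ := by
  unfold nn
  rw [← Set.ncard_union_eq _ (G.fin _ _) (G.fin _ _), ← inter_union_distrib_left, Ioc_union_Ioc_eq_Ioc h1 h2]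
  rw [Set.disjoint_left]
  rintro x ⟨-, hx⟩ ⟨-, hx2⟩
  linarith [hx.2, hx2.1]

lemma FD.nmono (G : FD κ a s F) {α β γ : ℝ} (h2 : β ≤ γ) :
    nn s α β ≤ nn s α γ := by
  unfold nn
  exact Set.ncard_le_ncard (inter_subset_inter_right _ (Ioc_subset_Ioc_right h2)) (G.fin _ _)

lemma FD.diff (G : FD κ a s F) (H : Data κ a b c d s θ) {α β : ℝ} (h0 : 0 ≤ α) (h1 : α ≤ β) :
    Filter.Tendsto (fun k : ℕ => (nn s (((κ:ℝ)/a)^k*α) (((κ:ℝ)/a)^k*β) : ℝ)/(κ:ℝ)^k)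
    Filter.atTop (nhds (F β - F α)) := by
  have := (G.lim β (h0.trans h1)).sub (G.lim α h0)
  refine this.congr fun k => ?_
  have hp : 0 < ((κ:ℝ)/a)^k := pow_pos H.tau0 k
  rw [G.add (α := 0) (β := ((κ:ℝ)/a)^k*α) (γ := ((κ:ℝ)/a)^k*β) (by positivity)
    (mul_le_mul_of_nonneg_left h1 hp.le)]
  push_cast; ring

lemma FD.Fmono (G : FD κ a s F) (H : Data κ a b c d s θ) {α β : ℝ} (h0 : 0 ≤ α) (h1 : α ≤ β) :
    F α ≤ F β := by
  have := ge_of_tendsto' (G.diff H h0 h1) (b := 0) (fun k => by positivity)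
  linarith

lemma FD.F0 (G : FD κ a s F) : F 0 = 0 := by
  have := G.lim 0 le_rfl
  simp only [mul_zero, nn, Ioc_self, inter_empty, ncard_empty, Nat.cast_zero, zero_div] at this
  exact tendsto_nhds_unique this tendsto_const_nhds

lemma FD.Fscale (G : FD κ a s F) (H : Data κ a b c d s θ) {l : ℝ} (h0 : 0 ≤ l) :
    F (κ/a*l) = κ * F l := by
  have h1 := (G.lim (κ/a*l) (mul_nonneg H.tau0.le h0))
  have h2 := ((Filter.tendsto_add_atTop_iff_nat 1).2 (G.lim l h0)).const_mul (κ:ℝ)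
  refine tendsto_nhds_unique h1 (h2.congr fun k => ?_)
  have : (κ:ℝ) ≠ 0 := by linarith [H.kpos]
  rw [pow_succ, pow_succ, mul_assoc]
  field_simp

lemma FD.Fscalek (G : FD κ a s F) (H : Data κ a b c d s θ) {l : ℝ} (h0 : 0 ≤ l) (k : ℕ) :
    F ((κ/a)^k*l) = κ^k * F l := by
  induction k with
  | zero => simp
  | succ k ih =>
    rw [pow_succ', mul_assoc, G.Fscale H (mul_nonneg (pow_nonneg H.tau0.le _) h0), ih]; ring

lemma FD.U1 (G : FD κ a s F) (H : Data κ a b c d s θ) {α β : ℝ}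
    (hd : ∀ l ∈ Ioo α β, d l ≠ 0) : nn s α β ≤ 3 := by
  have hsub : ({l | 0 < l ∧ s l = 0} ∩ Ioc α β) ⊆ ({l | l ∈ Ioo α β ∧ c l = 1} ∪ {l | l ∈ Ioo α β ∧ c l = -1}) ∪ {β} := by
    rintro l ⟨⟨h1, h2⟩, h3, h4⟩
    rcases h4.eq_or_lt with h4 | h4
    · right; exact h4
    · left
      have := H.det l
      rw [h2, zero_mul, sub_zero] at this
      rcases eps_cases this with h | h
      · left; exact ⟨⟨h3, h4⟩, h⟩
      · right; exact ⟨⟨h3, h4⟩, h⟩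
  have s1 : {l | l ∈ Ioo α β ∧ c l = 1}.Subsingleton := fun x hx y hy =>
    H.c_inj 1 (by norm_num) (convex_Ioo α β) hd hx.1 hy.1 hx.2 hy.2
  have s2 : {l | l ∈ Ioo α β ∧ c l = -1}.Subsingleton := fun x hx y hy =>
    H.c_inj (-1) (by norm_num) (convex_Ioo α β) hd hx.1 hy.1 hx.2 hy.2
  have f1 := s1.finite
  have f2 := s2.finite
  unfold nn
  refine (Set.ncard_le_ncard hsub ((f1.union f2).union (finite_singleton _))).trans ?_
  refine (Set.ncard_union_le _ _).trans ?_
  have := Set.ncard_union_le {l | l ∈ Ioo α β ∧ c l = 1} {l | l ∈ Ioo α β ∧ c l = -1}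
  have g1 : {l | l ∈ Ioo α β ∧ c l = 1}.ncard ≤ 1 := (Set.ncard_le_one f1).2 (fun x hx y hy => s1 hx hy)
  have g2 : {l | l ∈ Ioo α β ∧ c l = -1}.ncard ≤ 1 := (Set.ncard_le_one f2).2 (fun x hx y hy => s2 hx hy)
  rw [ncard_singleton]
  omega

lemma FD.U2 (G : FD κ a s F) (H : Data κ a b c d s θ) (j : ℕ) : ∀ {α β : ℝ},
    (∀ l ∈ Ioo α β, d l ≠ 0) → nn s (((κ:ℝ)/a)^j*α) (((κ:ℝ)/a)^j*β) ≤ 3 * κ^j := by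
  induction j with
  | zero => intro α β hd; simpa using G.U1 H hd
  | succ j ih =>
    have split : ∀ W : Finset ℝ, ∀ A B, (∀ l ∈ Ioo A B, l ∉ W → d l ≠ 0) →
        nn s (((κ:ℝ)/a)^j*A) (((κ:ℝ)/a)^j*B) ≤ 3 * κ^j * (W.card + 1) := by
      intro W
      induction W using Finset.induction_on_max with
      | empty => intro A B h; simpa using ih (fun l hl => h l hl (by simp))
      | insert m W' hm ihW =>
        intro A B h
        have hmW : m ∉ W' := fun hh => lt_irrefl _ (hm m hh)
        rw [Finset.card_insert_of_notMem hmW]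
        by_cases hmem : m ∈ Ioo A B
        · have hp : 0 ≤ ((κ:ℝ)/a)^j := (pow_pos H.tau0 j).le
          rw [G.add (mul_le_mul_of_nonneg_left hmem.1.le hp) (mul_le_mul_of_nonneg_left hmem.2.le hp)]
          have e1 := ihW A m (fun l hl hl2 => h l ⟨hl.1, hl.2.trans hmem.2⟩ (by
            rw [Finset.mem_insert, not_or]; exact ⟨hl.2.ne, hl2⟩))
          have e2 : _ := ih (α := m) (β := B) (fun l hl => h l ⟨hmem.1.trans hl.1, hl.2⟩ (by
            rw [Finset.mem_insert, not_or]; exact ⟨hl.1.ne', fun hh => lt_asymm hl.1 (hm l hh)⟩))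
          calc _ ≤ _ := add_le_add e1 e2
            _ = _ := by ring
        · refine (ihW A B (fun l hl hl2 => h l hl (by
            rw [Finset.mem_insert, not_or]; exact ⟨fun e => hmem (e ▸ hl), hl2⟩))).trans ?_
          exact Nat.mul_le_mul_left _ (by omega)
    intro α β hd
    have hτ := H.tau0
    have hκ1 : 1 ≤ κ := by linarith [H.hκ]
    obtain ⟨S, hS, hS2⟩ := uK_zeros_card hκ1
    classical
    -- zeros
    let Y : Set ℝ := {x | x ∈ Ioo α β ∧ uK κ (θ x) = 0}
    have hinj : InjOn θ Y := by
      intro x hx y hy hxy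
      have := abs_le.1 (uK_zero_lt hκ1 hx.2).le
      exact H.th_inj (θ x) this (convex_Ioo α β) hd hx.1 hy.1 rfl hxy.symm
    have hmaps : MapsTo θ Y (S : Set ℝ) := fun x hx => hS2 _ hx.2
    have hYf : Y.Finite := Finite.of_injOn hmaps hinj S.finite_toSet
    have hYc : Y.ncard ≤ κ - 1 := by
      refine le_trans (Set.ncard_le_ncard_of_injOn θ hmaps hinj S.finite_toSet) ?_
      rw [ncard_coe_finset]; exact hS
    let W := (hYf.toFinset).image (fun x => (κ:ℝ)/a * x)
    have hW : W.card ≤ κ - 1 := by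
      refine Finset.card_image_le.trans ?_
      rwa [← ncard_eq_toFinset_card Y hYf]
    have := split W (κ/a*α) (κ/a*β) (by
      intro l hl hlW hz
      apply hlW
      have e : l = κ/a * (l/(κ/a)) := (mul_div_cancel₀ l hτ.ne').symm
      have hm : l/(κ/a) ∈ Ioo α β := by
        constructor
        · rw [lt_div_iff₀ hτ]; linarith [hl.1]
        · rw [div_lt_iff₀ hτ]; linarith [hl.2]
      refine Finset.mem_image.2 ⟨l/(κ/a), ?_, e.symm⟩
      rw [Finite.mem_toFinset]
      refine ⟨hm, ?_⟩
      have h2 := H.hd' (l/(κ/a))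
      rw [← e, hz, mul_zero] at h2
      exact (mul_eq_zero.1 h2.symm).resolve_right (hd _ hm))
    rw [pow_succ, mul_assoc, mul_assoc]
    refine this.trans ?_
    rw [pow_succ, ← mul_assoc]
    exact Nat.mul_le_mul_left _ (by omega)

lemma FD.Fle (G : FD κ a s F) (H : Data κ a b c d s θ) {α β : ℝ} (h0 : 0 ≤ α) (h1 : α ≤ β)
    (hd : ∀ l ∈ Ioo α β, d l ≠ 0) : F β - F α ≤ 3 := by
  refine le_of_tendsto' (G.diff H h0 h1) fun k => ?_
  have : (0:ℝ) < (κ:ℝ)^k := pow_pos (by linarith [H.kpos]) k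
  rw [div_le_iff₀ this]
  exact_mod_cast G.U2 H k hd

lemma FD.Fgap (G : FD κ a s F) (H : Data κ a b c d s θ) {α β : ℝ} (h0 : 0 ≤ α) (h1 : α ≤ β)
    (hd : ∀ l ∈ Ioo α β, ∀ j : ℕ, d ((κ/a)^(j+1) * l) ≠ 0) : F β = F α := by
  have hle : F β - F α ≤ 0 := by
    have ht : Filter.Tendsto (fun k : ℕ => (3:ℝ) / (κ:ℝ)^k) Filter.atTop (nhds 0) := by
      apply Filter.Tendsto.const_div_atTop
      exact tendsto_pow_atTop_atTop_of_one_lt (by linarith [H.kpos])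
    refine le_of_tendsto_of_tendsto (G.diff H h0 h1) ht ?_
    filter_upwards [Filter.eventually_ge_atTop 1] with k hk
    have : (0:ℝ) < (κ:ℝ)^k := pow_pos (by linarith [H.kpos]) k
    gcongr
    have hp : 0 < ((κ:ℝ)/a)^k := pow_pos H.tau0 k
    have hU : nn s (((κ:ℝ)/a)^k*α) (((κ:ℝ)/a)^k*β) ≤ 3 := by
     refine G.U1 H ?_
     intro l hl
     have := hd (l/(κ/a)^k) ⟨by rw [lt_div_iff₀ hp]; linarith [hl.1], by rw [div_lt_iff₀ hp]; linarith [hl.2]⟩ (k-1)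
     rw [Nat.sub_add_cancel hk] at this
     convert this using 2
     exact (mul_div_cancel₀ l hp.ne').symm
    exact_mod_cast hU
  linarith [G.Fmono H h0 h1]
end Cant

set_option linter.unusedSectionVars false
set_option linter.unusedVariables false
namespace Cant
open Set

variable {κ : ℕ} {a b : ℝ} {c d s θ F : ℝ → ℝ}

lemma sign_const {f : ℝ → ℝ} (hf : Continuous f) {u v : ℝ} (h : ∀ l ∈ Ioo u v, f l ≠ 0)
    {x y : ℝ} (hx : x ∈ Ioo u v) (hy : y ∈ Ioo u v) (hfx : f x < 0) : f y < 0 := by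
  by_contra hfy
  push Not at hfy
  obtain ⟨z, hz, hz2⟩ := isPreconnected_Ioo.intermediate_value hx hy hf.continuousOn ⟨hfx.le, hfy⟩
  exact h z hz hz2

lemma Data.next (H : Data κ a b c d s θ) {z w : ℝ} (hz : d z = 0) (hzw : z < w) (hw : d w = 0) :
    ∃ z', z < z' ∧ z' ≤ w ∧ d z' = 0 ∧ c z' = - c z ∧ ∀ l ∈ Ioo z z', c z * d l < 0 := by
  obtain ⟨δ, hδ, h1, -⟩ := H.near hz
  let S : Set ℝ := {l | z + δ/2 ≤ l ∧ d l = 0}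
  have hSc : IsClosed S := (isClosed_le continuous_const continuous_id).inter (isClosed_eq H.cd continuous_const)
  have hfar : ∀ l, z < l → d l = 0 → z + δ ≤ l := by
    intro l hl hd
    by_contra hh
    push Not at hh
    have := h1 l ⟨hl, hh⟩
    rw [hd] at this; simp at this
  have hwS : w ∈ S := ⟨by linarith [hfar w hzw hw], hw⟩
  have hbd : BddBelow S := ⟨z + δ/2, fun l hl => hl.1⟩
  have hm := hSc.csInf_mem ⟨w, hwS⟩ hbd
  set z' := sInf S with hz'
  have hzz : z < z' := by linarith [hm.1]
  have hne : ∀ l ∈ Ioo z z', c z * d l ≠ 0 := by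
    intro l hl
    have hc : c z ≠ 0 := fun h => by have := H.csq hz; rw [h] at this; norm_num at this
    refine mul_ne_zero hc fun hd => ?_
    have := csInf_le hbd (show l ∈ S from ⟨by linarith [hfar l hl.1 hd], hd⟩)
    linarith [hl.2]
  have hp : z + δ/2 ∈ Ioo z z' := ⟨by linarith, by linarith [hfar z' hzz hm.2]⟩
  have hneg : ∀ l ∈ Ioo z z', c z * d l < 0 := fun l hl =>
    sign_const (f := fun l => c z * d l) (continuous_const.mul H.cd) hne hp hl
      (h1 _ ⟨by linarith, by linarith⟩)
  refine ⟨z', hzz, csInf_le hbd hwS, hm.2, ?_, hneg⟩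
  obtain ⟨δ2, hδ2, -, h2⟩ := H.near hm.2
  have hq : max ((z+z')/2) (z' - δ2/2) ∈ Ioo z z' :=
    ⟨lt_max_of_lt_left (by linarith), max_lt (by linarith) (by linarith)⟩
  have e1 := hneg _ hq
  have e2 := h2 _ ⟨lt_max_of_lt_right (by linarith), hq.2⟩
  rcases eps_cases (H.csq hz) with h | h <;> rcases eps_cases (H.csq hm.2) with h' | h' <;>
    rw [h] at e1 ⊢ <;> rw [h'] at e2 ⊢ <;> first | linarith | norm_num

def Cross (d c : ℝ → ℝ) (α β : ℝ) : Prop := α < β ∧ d α = 0 ∧ d β = 0 ∧ c β = - c α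

lemma Data.cross_zero (H : Data κ a b c d s θ) {α β : ℝ} (h : Cross d c α β) :
    ∃ ζ ∈ Ioo α β, 0 < s ζ * c α := by
  obtain ⟨h1, h2, h3, h4⟩ := h
  obtain ⟨z', g1, g2, g3, g4, g5⟩ := H.next h2 h1 h3
  have hsq := H.csq h2
  have hcont : ContinuousOn (fun l => c α * c l) (Icc α z') := (continuous_const.mul H.cc).continuousOn
  have := intermediate_value_Ioo' g1.le hcont
  obtain ⟨ζ, hζ, e⟩ := this (show (0:ℝ) ∈ Ioo _ _ from ⟨by simp only [g4]; nlinarith, by nlinarith⟩)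
  have hc : c ζ = 0 := by
    have hne : c α ≠ 0 := fun h => by rw [h] at hsq; norm_num at hsq
    exact (mul_eq_zero.1 e).resolve_left hne
  refine ⟨ζ, ⟨hζ.1, hζ.2.trans_le g2⟩, ?_⟩
  have hdet := H.det ζ
  rw [hc] at hdet
  have h5 := g5 ζ hζ
  have : (s ζ * c α) * (c α * d ζ) = -1 := by linear_combination (s ζ * d ζ) * hsq - hdet
  by_contra hh
  push Not at hh
  nlinarith [mul_nonneg_of_nonpos_of_nonpos hh h5.le]

lemma FD.cross2 (G : FD κ a s F) (H : Data κ a b c d s θ) {α β γ : ℝ} (h0 : 0 ≤ α)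
    (h1 : Cross d c α β) (h2 : Cross d c β γ) : 1 ≤ nn s α γ := by
  obtain ⟨ζ1, hz1, p1⟩ := H.cross_zero h1
  obtain ⟨ζ2, hz2, p2⟩ := H.cross_zero h2
  rw [h1.2.2.2] at p2
  have hcont : ContinuousOn (fun l => c α * s l) (Icc ζ1 ζ2) := (continuous_const.mul H.cs).continuousOn
  have := intermediate_value_Icc' (by linarith [hz1.2, hz2.1]) hcont
  obtain ⟨x, hx, e⟩ := this (show (0:ℝ) ∈ Icc _ _ from ⟨by nlinarith, by nlinarith⟩)
  have hs : s x = 0 := by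
    have hsq := H.csq h1.2.1
    have hne : c α ≠ 0 := fun h => by rw [h] at hsq; norm_num at hsq
    exact (mul_eq_zero.1 e).resolve_left hne
  unfold nn
  refine (Set.ncard_pos (G.fin _ _)).2 ⟨x, ?_⟩
  exact ⟨⟨by linarith [hx.1, hz1.1], hs⟩, by linarith [hx.1, hz1.1], by linarith [hx.2, hz2.2]⟩

lemma Data.pt (H : Data κ a b c d s θ) {x ε : ℝ} (hε : ε^2 = 1) {i : ℕ}
    (hx : ε * θ x = Real.cos (Real.pi * i / κ)) (hi : d x = 0 ∨ (0 < i ∧ i < κ)) :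
    d (κ/a*x) = 0 ∧ c (κ/a*x) = ε^κ * (-1)^i := by
  have hk : (0:ℝ) < κ := by linarith [H.kpos]
  have ex : θ x = ε * Real.cos (Real.pi * i / κ) := by rw [← hx]; linear_combination -(θ x) * hε
  have hp := par κ (Real.cos (Real.pi * i / κ)) ε hε
  rw [← ex] at hp
  obtain ⟨t1, t2⟩ := TU_cos κ (Real.pi * i / κ)
  have e : (κ:ℝ) * (Real.pi * i / κ) = i * Real.pi := by field_simp
  rw [e] at t1 t2
  rw [Real.sin_nat_mul_pi] at t2
  rw [Real.cos_nat_mul_pi] at t1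
  have hd : d (κ/a*x) = 0 := by
    rw [H.hd]
    rcases hi with h | ⟨h, h'⟩
    · rw [h]; simp
    · have : 0 < Real.sin (Real.pi * i / κ) := by
        apply Real.sin_pos_of_pos_of_lt_pi
        · have : (0:ℝ) < i := by exact_mod_cast h
          have := Real.pi_pos
          positivity
        · rw [div_lt_iff₀ hk]
          have : (i:ℝ) < κ := by exact_mod_cast h'
          have := Real.pi_pos
          gcongr
      have := (mul_eq_zero.1 t2).resolve_right this.ne'
      rw [hp.2, this]; simp
  refine ⟨hd, ?_⟩
  rw [← H.tz hd, H.hth', hd, hp.1, t1]; ring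

lemma Data.cos_lt (H : Data κ a b c d s θ) {i j : ℕ} (hij : i < j) (hj : j ≤ κ) :
    Real.cos (Real.pi * j / κ) < Real.cos (Real.pi * i / κ) := by
  have hk : (0:ℝ) < κ := by linarith [H.kpos]
  have hπ := Real.pi_pos
  have h1 : (i:ℝ) < j := by exact_mod_cast hij
  have h2 : (j:ℝ) ≤ κ := by exact_mod_cast hj
  apply Real.cos_lt_cos_of_nonneg_of_le_pi
  · positivity
  · rw [div_le_iff₀ hk]; gcongr
  · gcongr

lemma Data.split (H : Data κ a b c d s θ) {α β : ℝ} (h : Cross d c α β) :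
    ∃ x : ℕ → ℝ, x 0 = α ∧ x κ = β ∧ (∀ i < κ, Cross d c (κ/a * x i) (κ/a * x (i+1))) ∧
      ∀ i ≤ κ, c α * θ (x i) = Real.cos (Real.pi * i / κ) := by
  obtain ⟨h1, h2, h3, h4⟩ := h
  have hsq := H.csq h2
  have hk : (0:ℝ) < κ := by linarith [H.kpos]
  set ε := c α with hε
  have hα : ε * θ α = 1 := by rw [H.tz h2, ← hε]; linarith
  have hβ : ε * θ β = -1 := by rw [H.tz h3, h4]; linarith
  have hcont : Continuous (fun l => ε * θ l) := continuous_const.mul H.ct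
  have cosκ : Real.cos (Real.pi * (κ:ℕ) / κ) = -1 := by
    rw [mul_div_assoc, div_self hk.ne', mul_one, Real.cos_pi]
  have build : ∀ n, n < κ → ∃ x : ℕ → ℝ, x 0 = α ∧ (∀ i < n, x i < x (i+1)) ∧
      ∀ i ≤ n, x i < β ∧ ε * θ (x i) = Real.cos (Real.pi * i / κ) := by
    intro n
    induction n with
    | zero =>
      intro _
      refine ⟨fun _ => α, rfl, by simp, ?_⟩
      intro i hi
      obtain rfl : i = 0 := by omega
      refine ⟨h1, ?_⟩
      simp [hα]
    | succ n ih =>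
      intro hn
      obtain ⟨x, x0, x1, x2⟩ := ih (by omega)
      obtain ⟨g1, g2⟩ := x2 n le_rfl
      have l1 := H.cos_lt (Nat.lt_succ_self n) hn.le
      have l2 := H.cos_lt hn le_rfl
      rw [cosκ] at l2
      obtain ⟨y, hy, ey⟩ := intermediate_value_Ioo' g1.le hcont.continuousOn
        (show Real.cos (Real.pi * (n+1:ℕ) / κ) ∈ Ioo _ _ from ⟨by simp only [hβ]; exact l2, by simp only [g2]; exact l1⟩)
      refine ⟨fun i => if i ≤ n then x i else y, by simp [x0], ?_, ?_⟩
      · intro i hi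
        rcases (Nat.lt_succ_iff.1 hi).eq_or_lt with rfl | h
        · simp [hy.1]
        · have : i + 1 ≤ n := h
          simp [this, h.le, x1 i h]
      · intro i hi
        by_cases hin : i ≤ n
        · simp [hin, x2 i hin]
        · obtain rfl : i = n+1 := by omega
          simp only [hin, if_false]
          exact ⟨hy.2, ey⟩
  obtain ⟨x, x0, x1, x2⟩ := build (κ-1) (by have := H.hκ; omega)
  have hκ := H.hκ
  refine ⟨fun i => if i < κ then x i else β, by simp [x0]; omega, by simp, ?_, ?_⟩
  rotate_left
  · intro i hi
    by_cases h : i < κ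
    · simp only [h, if_true]; exact (x2 i (by omega)).2
    · obtain rfl : i = κ := by omega
      simp only [lt_irrefl, if_false]; rw [hβ, cosκ]
  have key : ∀ i ≤ κ, d (κ/a * (if i < κ then x i else β)) = 0 ∧
      c (κ/a * (if i < κ then x i else β)) = ε^κ * (-1)^i := by
    intro i hi
    by_cases hik : i < κ
    · simp only [hik, if_true]
      apply H.pt hsq (x2 i (by omega)).2
      rcases Nat.eq_zero_or_pos i with h | h
      · left; rw [h, x0, h2]
      · right; exact ⟨h, hik⟩
    · obtain rfl : i = κ := by omega
      simp only [lt_irrefl, if_false]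
      apply H.pt hsq (by rw [cosκ, hβ]) (Or.inl h3)
  intro i hi
  refine ⟨?_, (key i hi.le).1, (key (i+1) hi).1, ?_⟩
  · apply mul_lt_mul_of_pos_left _ H.tau0
    simp only [hi, if_true]
    by_cases h : i + 1 < κ
    · simp only [h, if_true]; exact x1 i (by omega)
    · simp only [h, if_false]; exact (x2 i (by omega)).1
  · simp only
    rw [(key i hi.le).2, (key (i+1) hi).2, pow_succ]; ring

lemma FD.low (G : FD κ a s F) (H : Data κ a b c d s θ) (j : ℕ) : ∀ {α β : ℝ}, 0 ≤ α →
    Cross d c α β → κ^j ≤ nn s (((κ:ℝ)/a)^(j+1)*α) (((κ:ℝ)/a)^(j+1)*β) := by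
  have hκ := H.hκ
  have hτ := H.tau0
  have mono : ∀ {α : ℝ}, ∀ x : ℕ → ℝ, x 0 = α → (∀ i < κ, Cross d c (κ/a * x i) (κ/a * x (i+1))) →
      ∀ i < κ, x i < x (i+1) := fun x _ h i hi => lt_of_mul_lt_mul_left (h i hi).1 hτ.le
  induction j with
  | zero =>
    intro α β h0 h
    obtain ⟨x, x0, xk, hx, -⟩ := H.split h
    have hm := mono x x0 hx
    have c1 := hx 0 (by omega)
    have c2 := hx 1 (by omega)
    rw [x0] at c1
    have := G.cross2 H (by positivity) c1 c2
    have h2 : ∀ i ≤ κ, 2 ≤ i → x 2 ≤ x i := by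
      intro i hi h2
      induction i, h2 using Nat.le_induction with
      | base => rfl
      | succ i _ ih => exact (ih (by omega)).trans (hm i (by omega)).le
    have := this.trans (G.nmono (mul_le_mul_of_nonneg_left (h2 κ le_rfl hκ) hτ.le))
    rw [xk] at this
    simpa using this
  | succ j ih =>
    intro α β h0 h
    obtain ⟨x, x0, xk, hx, -⟩ := H.split h
    have hm := mono x x0 hx
    have hp : 0 ≤ ((κ:ℝ)/a)^(j+1) := (pow_pos hτ _).le
    have key : ∀ i ≤ κ, α ≤ x i ∧ i * κ^j ≤ nn s (((κ:ℝ)/a)^(j+1)*(κ/a*x 0)) (((κ:ℝ)/a)^(j+1)*(κ/a*x i)) := by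
      intro i hi
      induction i with
      | zero => simp [x0]
      | succ i ihi =>
        obtain ⟨e1, e2⟩ := ihi (by omega)
        have hmi := hm i (by omega)
        refine ⟨by linarith, ?_⟩
        have e3 := ih (mul_nonneg hτ.le (h0.trans e1)) (hx i (by omega))
        rw [G.add (β := ((κ:ℝ)/a)^(j+1)*(κ/a*x i))
          (mul_le_mul_of_nonneg_left (mul_le_mul_of_nonneg_left (by rw [x0]; exact e1) hτ.le) hp)
          (mul_le_mul_of_nonneg_left (mul_le_mul_of_nonneg_left hmi.le hτ.le) hp)]
        rw [add_mul, one_mul]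
        exact add_le_add e2 e3
    have := (key κ le_rfl).2
    rw [x0, xk] at this
    rw [pow_succ (κ:ℕ), mul_comm (κ^j), pow_succ _ (j+1), mul_assoc, mul_assoc]
    exact this

lemma FD.Flow (G : FD κ a s F) (H : Data κ a b c d s θ) {α β : ℝ} (h0 : 0 ≤ α)
    (h : Cross d c α β) : 1 / (κ:ℝ) ≤ F β - F α := by
  refine ge_of_tendsto ((Filter.tendsto_add_atTop_iff_nat 1).2 (G.diff H h0 h.1.le)) ?_
  filter_upwards with k
  have : (0:ℝ) < κ := by linarith [H.kpos]
  rw [pow_succ (κ:ℝ), le_div_iff₀ (by positivity)]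
  have h2 := G.low H k h0 h
  have h3 : ((κ:ℝ)^k) ≤ (nn s (((κ:ℝ)/a)^(k+1)*α) (((κ:ℝ)/a)^(k+1)*β) : ℝ) := by exact_mod_cast h2
  refine le_trans (le_of_eq ?_) h3
  field_simp

lemma FD.Flowk (G : FD κ a s F) (H : Data κ a b c d s θ) {α β : ℝ} (h0 : 0 ≤ α) (h1 : 0 ≤ β) (k : ℕ)
    (h : Cross d c ((κ/a)^k*α) ((κ/a)^k*β)) : 1 / (κ:ℝ)^(k+1) ≤ F β - F α := by
  have := G.Flow H (mul_nonneg (pow_nonneg H.tau0.le _) h0) h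
  rw [G.Fscalek H h0, G.Fscalek H h1, ← mul_sub] at this
  have hk : (0:ℝ) < κ := by linarith [H.kpos]
  rw [div_le_iff₀ (by positivity)] at this ⊢
  rw [pow_succ]; linarith
end Cant

set_option linter.unusedSectionVars false
set_option linter.unusedVariables false
namespace Cant
open Set

variable {κ : ℕ} {a b : ℝ} {c d s θ F : ℝ → ℝ}

lemma no_bump {m N : ℝ → ℝ} {u v : ℝ} (hN : ∀ l ∈ Ioo u v, 0 < N l ∧ ContinuousAt N l ∧ HasDerivAt m (N l) l)
    (hB : ∀ l1 ∈ Ioo u v, ∀ l2 ∈ Ioo u v, (m l2 - m l1)^2 ≤ (l2 - l1)^2 * (N l1 * N l2))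
    {x y ξ : ℝ} (hx : x ∈ Ioo u v) (hy : y ∈ Ioo u v) (h1 : x < ξ) (h2 : ξ < y)
    (n1 : N x < N ξ) (n2 : N y < N ξ) : False := by
  set L := max (N x) (N y) with hL
  have hLξ : L < N ξ := max_lt n1 n2
  have hL0 : 0 < L := lt_max_of_lt_left (hN x hx).1
  have hξ : ξ ∈ Ioo u v := ⟨hx.1.trans h1, h2.trans hy.2⟩
  have hc : ∀ p q, p ∈ Ioo u v → q ∈ Ioo u v → ContinuousOn N (Icc p q) := fun p q hp hq l hl =>
    (hN l ⟨hp.1.trans_le hl.1, hl.2.trans_lt hq.2⟩).2.1.continuousWithinAt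
  have c1 : IsCompact (Icc x ξ ∩ N ⁻¹' Iic L) :=
    isCompact_Icc.of_isClosed_subset ((hc x ξ hx hξ).preimage_isClosed_of_isClosed isClosed_Icc isClosed_Iic) inter_subset_left
  have c2 : IsCompact (Icc ξ y ∩ N ⁻¹' Iic L) :=
    isCompact_Icc.of_isClosed_subset ((hc ξ y hξ hy).preimage_isClosed_of_isClosed isClosed_Icc isClosed_Iic) inter_subset_left
  obtain ⟨x', hx', hxm⟩ := c1.exists_isGreatest ⟨x, ⟨⟨le_rfl, h1.le⟩, mem_preimage.2 (mem_Iic.2 (le_max_left _ _))⟩⟩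
  obtain ⟨y', hy', hym⟩ := c2.exists_isLeast ⟨y, ⟨⟨h2.le, le_rfl⟩, mem_preimage.2 (mem_Iic.2 (le_max_right _ _))⟩⟩
  have hx'L : N x' ≤ L := hx'.2
  have hy'L : N y' ≤ L := hy'.2
  have l1 : x' < ξ := lt_of_le_of_ne hx'.1.2 fun h => by rw [h] at hx'L; linarith
  have l2 : ξ < y' := lt_of_le_of_ne hy'.1.1 fun h => by rw [← h] at hy'L; linarith
  have mx : x' ∈ Ioo u v := ⟨hx.1.trans_le hx'.1.1, l1.trans hξ.2⟩
  have my : y' ∈ Ioo u v := ⟨hξ.1.trans l2, hy'.1.2.trans_lt hy.2⟩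
  have hsub : ∀ l ∈ Icc x' y', l ∈ Ioo u v := fun l hl => ⟨mx.1.trans_le hl.1, hl.2.trans_lt my.2⟩
  obtain ⟨η, hη, e⟩ := exists_hasDerivAt_eq_slope m N (l1.trans l2)
    (fun l hl => (hN l (hsub l hl)).2.2.continuousAt.continuousWithinAt)
    (fun l hl => (hN l (hsub l ⟨hl.1.le, hl.2.le⟩)).2.2)
  have hηL : L < N η := by
    by_contra hh
    push Not at hh
    rcases le_total η ξ with h | h
    · have := hxm ⟨⟨hx'.1.1.trans hη.1.le, h⟩, hh⟩
      linarith [hη.1]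
    · have := hym ⟨⟨h, hη.2.le.trans hy'.1.2⟩, hh⟩
      linarith [hη.2]
  have hyx : 0 < y' - x' := by linarith
  have e' : m y' - m x' = N η * (y' - x') := by rw [e]; field_simp
  have := hB x' mx y' my
  rw [e', mul_pow, mul_comm] at this
  have h3 := le_of_mul_le_mul_left this (by positivity)
  have h4 : N x' * N y' ≤ L * L := mul_le_mul hx'L hy'L (hN y' my).1.le hL0.le
  nlinarith

lemma trig (hκ : 2 ≤ κ) : ∃ L > 0, ∀ x, Real.cos (Real.pi / κ) < x → x ≤ 1 →
    0 < uK κ x ∧ 1 + tK κ x ≤ L * (x - Real.cos (Real.pi / κ)) * uK κ x := by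
  have hk : (2:ℝ) ≤ κ := by exact_mod_cast hκ
  have hπ := Real.pi_pos
  set α := Real.pi / κ with hα
  have α0 : 0 < α := by positivity
  have α2 : α ≤ Real.pi/2 := by rw [hα]; gcongr
  have s0 : 0 < Real.sin (α/2) := Real.sin_pos_of_pos_of_lt_pi (by linarith) (by linarith)
  refine ⟨κ * Real.pi / (4 * Real.sin (α/2)), by positivity, ?_⟩
  intro x hx hx1
  have hx0 : -1 ≤ x := by linarith [Real.neg_one_le_cos α]
  set φ := Real.arccos x with hφ
  have ex : Real.cos φ = x := Real.cos_arccos hx0 hx1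
  have φ0 : 0 ≤ φ := Real.arccos_nonneg x
  have φα : φ < α := by
    by_contra h
    push Not at h
    have := Real.cos_le_cos_of_nonneg_of_le_pi α0.le (Real.arccos_le_pi x) h
    rw [← hφ, ex] at this; linarith
  obtain ⟨t1, t2⟩ := TU_cos κ φ
  rw [ex] at t1 t2
  set w := κ * φ / 2 with hw
  have e2 : (κ:ℝ) * φ = 2 * w := by rw [hw]; ring
  rw [e2] at t1 t2
  have hκα : (κ:ℝ) * α = Real.pi := by rw [hα]; field_simp
  have w0 : 0 ≤ w := by positivity
  have wlt : w < Real.pi/2 := by rw [hw, ← hκα]; gcongr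
  have φw : φ ≤ w := by rw [hw]; nlinarith
  have cw : 0 < Real.cos w := Real.cos_pos_of_mem_Ioo ⟨by linarith, wlt⟩
  have hU : 2 * Real.cos w ≤ uK κ x := by
    rcases φ0.eq_or_lt with h | h
    · have hx1 : x = 1 := by rw [← ex, ← h, Real.cos_zero]
      have : uK κ 1 = κ := by unfold uK; simp
      rw [hx1, this]
      linarith [Real.cos_le_one w]
    · have sφ : 0 < Real.sin φ := Real.sin_pos_of_pos_of_lt_pi h (by linarith)
      have : Real.sin φ ≤ Real.sin w := Real.sin_le_sin_of_le_of_le_pi_div_two (by linarith) wlt.le φw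
      rw [Real.sin_two_mul] at t2
      refine le_of_mul_le_mul_right ?_ sφ
      rw [t2]; nlinarith
  have hUp : 0 < uK κ x := by linarith
  refine ⟨hUp, ?_⟩
  have i1 : Real.cos w ≤ κ / 2 * (α - φ) := by
    rw [← Real.sin_pi_div_two_sub]
    refine (Real.sin_le (by linarith)).trans (le_of_eq ?_)
    rw [hw, ← hκα]; ring
  have i2 : Real.sin (α/2) ≤ Real.sin ((φ+α)/2) :=
    Real.sin_le_sin_of_le_of_le_pi_div_two (by linarith) (by linarith) (by linarith)
  have i3 : 2 / Real.pi * ((α-φ)/2) ≤ Real.sin ((α-φ)/2) := Real.mul_le_sin (by linarith) (by linarith)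
  have i4 : x - Real.cos α = 2 * Real.sin ((φ+α)/2) * Real.sin ((α-φ)/2) := by
    rw [← ex, Real.cos_sub_cos]
    have : (φ - α)/2 = -((α-φ)/2) := by ring
    rw [this, Real.sin_neg]; ring
  have i5 : α - φ ≤ Real.pi / (2 * Real.sin (α/2)) * (x - Real.cos α) := by
    have h1 : 0 ≤ 2 / Real.pi * ((α-φ)/2) := by
      apply mul_nonneg (by positivity); linarith
    have h2 : Real.sin (α/2) * (2 / Real.pi * ((α-φ)/2)) ≤ Real.sin ((φ+α)/2) * Real.sin ((α-φ)/2) :=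
      mul_le_mul i2 i3 h1 (s0.le.trans i2)
    rw [i4, div_mul_eq_mul_div, le_div_iff₀ (by positivity)]
    have h3 := mul_le_mul_of_nonneg_left h2 (by positivity : 0 ≤ 2 * Real.pi)
    have h4 : 2 * Real.pi * (Real.sin (α/2) * (2 / Real.pi * ((α-φ)/2))) = (α - φ) * (2 * Real.sin (α/2)) := by
      field_simp
    linarith
  have i6 : Real.cos w ≤ κ * Real.pi / (4 * Real.sin (α/2)) * (x - Real.cos α) := by
    refine i1.trans ((mul_le_mul_of_nonneg_left i5 (by positivity)).trans (le_of_eq ?_))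
    field_simp; ring
  have : 1 + tK κ x = 2 * Real.cos w ^ 2 := by rw [t1, Real.cos_two_mul]; ring
  rw [this]
  calc 2 * Real.cos w ^ 2 = Real.cos w * (2 * Real.cos w) := by ring
    _ ≤ Real.cos w * uK κ x := by gcongr
    _ ≤ _ := by gcongr

lemma Data.D0 (H : Data κ a b c d s θ) : ∃ D0 > 0, ∀ l, 0 < l →
    |θ (κ/a*l)| = Real.cos (Real.pi / κ) → |θ l| ≤ 1 ∧ D0 ≤ |d l| := by
  obtain ⟨K0, hK0, hV⟩ := H.V
  have hk := H.kpos
  have hπ := Real.pi_pos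
  set α := Real.pi / κ with hα
  have hκ0 : (0:ℝ) < κ := by linarith
  have α0 : 0 < α := by positivity
  have α2 : α ≤ Real.pi/2 := by rw [hα]; gcongr
  have g0 : 0 ≤ Real.cos α := Real.cos_nonneg_of_mem_Icc ⟨by linarith, α2⟩
  have g1 : Real.cos α < 1 := by
    rw [← Real.cos_zero]; exact Real.cos_lt_cos_of_nonneg_of_le_pi le_rfl (by linarith) α0
  set g := Real.cos α
  have hC := H.Cpos
  set C := b * (1 - a) / (2 * a ^ 2) with hCdef
  refine ⟨min ((1-g)/2/(C*κ)) ((1 - ((1+g)/2)^2)/(κ^2*K0)), lt_min (by apply div_pos <;> [linarith; positivity])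
    (div_pos (by nlinarith) (by positivity)), ?_⟩
  intro l hl h1
  have hθ : |θ l| ≤ 1 := by
    by_contra h
    have := (H.gap_step ⟨(not_le.1 h).le, (H.R l hl).resolve_left h⟩).2
    linarith
  refine ⟨hθ, ?_⟩
  obtain ⟨hT, hU⟩ := uK_le κ _ hθ
  have e := H.hth l
  rw [← hCdef] at e
  by_cases hTg : (1+g)/2 ≤ |tK κ (θ l)|
  · refine (min_le_left _ _).trans ?_
    rw [div_le_iff₀ (by positivity)]
    have t : |tK κ (θ l)| ≤ |θ (κ/a*l)| + |C * uK κ (θ l) * d l| := by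
      have : tK κ (θ l) = θ (κ/a*l) - C * uK κ (θ l) * d l := by rw [e]; ring
      rw [this]; exact abs_sub _ _
    rw [abs_mul, abs_mul, abs_of_pos hC] at t
    have : C * |uK κ (θ l)| * |d l| ≤ C * κ * |d l| := by gcongr
    nlinarith
  · push Not at hTg
    refine (min_le_right _ _).trans ?_
    rw [div_le_iff₀ (by positivity)]
    have p := pell κ (θ l)
    have hv := hV l hl
    have t2 : tK κ (θ l)^2 ≤ ((1+g)/2)^2 := by
      rw [← sq_abs]; gcongr
    have : uK κ (θ l)^2 ≤ (κ:ℝ)^2 := by rw [← sq_abs]; gcongr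
    have hv0 : 0 ≤ 1 - θ l^2 := by rw [← sq_abs]; nlinarith [abs_nonneg (θ l)]
    have t3 : uK κ (θ l)^2 * (1 - θ l^2) ≤ (κ:ℝ)^2 * (K0 * |d l|) :=
      mul_le_mul this hv hv0 (by positivity)
    nlinarith
end Cant

set_option linter.unusedSectionVars false
set_option linter.unusedVariables false
namespace Cant
open Set

variable {κ : ℕ} {a b : ℝ} {c d s θ F : ℝ → ℝ}

lemma mvt_ge {m N : ℝ → ℝ} {u v M : ℝ} (huv : u < v) (hN : ∀ l ∈ Icc u v, HasDerivAt m (N l) l ∧ M ≤ N l) :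
    M * (v - u) ≤ m v - m u := by
  obtain ⟨η, hη, e⟩ := exists_hasDerivAt_eq_slope m N huv
    (fun l hl => (hN l hl).1.continuousAt.continuousWithinAt)
    (fun l hl => (hN l ⟨hl.1.le, hl.2.le⟩).1)
  have := (hN η ⟨hη.1.le, hη.2.le⟩).2
  have h2 : 0 < v - u := by linarith
  rw [e, le_div_iff₀ h2] at this
  exact this

set_option maxHeartbeats 2000000 in
lemma FD.poro (G : FD κ a s F) (H : Data κ a b c d s θ) : ∃ γ > 0, ∀ z z', 0 ≤ z → z < z' →
    d z = 0 → d z' = 0 → c z' = - c z → (∀ l ∈ Ioo z z', c z * d l < 0) →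
    ∃ p y x q, z < p ∧ p < y ∧ y < x ∧ x < q ∧ q < z' ∧ F y = F x ∧ 1/(κ:ℝ)^3 ≤ F y - F p ∧
      1/(κ:ℝ)^3 ≤ F q - F x ∧ (γ * (y - p) ≤ x - y ∨ γ * (q - x) ≤ x - y) := by
  obtain ⟨D0, hD0, hD⟩ := H.D0
  obtain ⟨L, hL, htr⟩ := trig (κ := κ) H.hκ
  have hk := H.kpos
  have hκ := H.hκ
  have hκ0 : (0:ℝ) < κ := by linarith
  have hC := H.Cpos
  have hτ := H.tau0
  have ha := H.ha
  set C := b * (1 - a) / (2 * a ^ 2) with hCdef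
  set ca := Real.cos (Real.pi / κ) with hca
  have ca1 : ca < 1 := by
    have := H.cos_lt (i := 0) (j := 1) (by norm_num) (by omega)
    simpa using this
  set g0 := C / L with hg0
  have g0p : 0 < g0 := by positivity
  refine ⟨g0 * D0 / 2, by positivity, ?_⟩
  intro z z' hz0 hzz hz hz' hcz hneg
  set ε := c z with hε
  have hsq : ε^2 = 1 := H.csq hz
  have hne : ∀ l ∈ Ioo z z', d l ≠ 0 := fun l hl h => by
    have := hneg l hl; rw [h] at this; simp at this
  have habsε : |ε| = 1 := by rw [← sq_eq_sq₀ (abs_nonneg _) (by norm_num), sq_abs, hsq]; norm_num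
  obtain ⟨X, X0, Xk, hX, hXc⟩ := H.split ⟨hzz, hz, hz', hcz⟩
  have Xm : ∀ i < κ, X i < X (i+1) := fun i hi => lt_of_mul_lt_mul_left (hX i hi).1 hτ.le
  have X2 : X 2 ≤ z' := by
    have h2 : ∀ i ≤ κ, 2 ≤ i → X 2 ≤ X i := by
      intro i hi h2
      induction i, h2 using Nat.le_induction with
      | base => rfl
      | succ i _ ih => exact (ih (by omega)).trans (Xm i (by omega)).le
    rw [← Xk]; exact h2 κ le_rfl hκ
  have cr1 := hX 0 (by omega)
  have cr2 := hX 1 (by omega)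
  have m01 := Xm 0 (by omega)
  have m12 := Xm 1 (by omega)
  have ex := hXc 1 (by omega)
  rw [Nat.cast_one, mul_one, ← hca, ← hε] at ex
  simp only [zero_add] at cr1 m01
  rw [X0] at cr1 m01
  norm_num at cr2 m12
  set x := X 1 with hx
  -- subdivide
  obtain ⟨A, A0, Ak, hA, hAc⟩ := H.split cr1
  obtain ⟨E, E0, Ek, hE, hEc⟩ := H.split cr2
  have Am : ∀ i < κ, A i < A (i+1) := fun i hi => lt_of_mul_lt_mul_left (hA i hi).1 hτ.le
  have Em : ∀ i < κ, E i < E (i+1) := fun i hi => lt_of_mul_lt_mul_left (hE i hi).1 hτ.le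
  have Apos : ∀ i ≤ κ, 1 ≤ i → A 0 < A i := by
    intro i hi h1
    induction i, h1 using Nat.le_induction with
    | base => exact Am 0 (by omega)
    | succ i _ ih => exact (ih (by omega)).trans (Am i (by omega))
  have Epos : ∀ i ≤ κ, 2 ≤ i → E 1 < E i := by
    intro i hi h1
    induction i, h1 using Nat.le_induction with
    | base => exact Em 1 (by omega)
    | succ i _ ih => exact (ih (by omega)).trans (Em i (by omega))
  have hpm := Am (κ-1) (by omega)
  have hpc := hA (κ-1) (by omega)
  rw [Nat.sub_add_cancel (by omega), Ak] at hpm hpc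
  have hp0 := Apos (κ-1) (by omega) (by omega)
  rw [A0] at hp0
  have hqm := Em 0 (by omega)
  have hqc := hE 0 (by omega)
  simp only [zero_add] at hqm hqc
  rw [E0] at hqm hqc
  have hq2 := Epos κ le_rfl hκ
  rw [Ek] at hq2
  have thp := hAc (κ-1) (by omega)
  have thq := hEc 1 (by omega)
  rw [Nat.cast_one, mul_one, ← hca] at thq
  have cosk : Real.cos (Real.pi * (κ-1:ℕ) / κ) = -ca := by
    rw [Nat.cast_sub (by omega), hca, ← Real.cos_pi_sub]
    congr 1; field_simp; push_cast; ring
  rw [cosk] at thp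
  set p := A (κ-1) / (κ/a) with hp
  set q := E 1 / (κ/a) with hq
  have ep : A (κ-1) = κ/a * p := (mul_div_cancel₀ _ hτ.ne').symm
  have eq' : E 1 = κ/a * q := (mul_div_cancel₀ _ hτ.ne').symm
  rw [ep] at hpm hpc hp0 thp
  rw [eq'] at hqm hqc hq2 thq
  have zp : z < p := lt_of_mul_lt_mul_left hp0 hτ.le
  have px : p < x := lt_of_mul_lt_mul_left hpm hτ.le
  have xq : x < q := lt_of_mul_lt_mul_left hqm hτ.le
  have qX : q < X 2 := lt_of_mul_lt_mul_left hq2 hτ.le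
  have qz : q < z' := qX.trans_le X2
  have hp1 : 0 < p := by linarith
  have hq1 : 0 < q := by linarith
  have ca0 : 0 ≤ ca := by
    have hπ := Real.pi_pos
    apply Real.cos_nonneg_of_mem_Icc
    constructor
    · have : 0 < Real.pi / κ := by positivity
      linarith
    · gcongr
  have cabs : ∀ w, d w = 0 → |c w| = 1 := fun w hw => by
    rw [← sq_eq_sq₀ (abs_nonneg _) (by norm_num), sq_abs, H.csq hw]; norm_num
  obtain ⟨tp, dp⟩ := hD p hp1 (by
    have := congrArg abs thp
    rwa [abs_mul, cabs _ cr1.2.1, one_mul, abs_neg, abs_of_nonneg ca0] at this)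
  obtain ⟨tq, dq⟩ := hD q hq1 (by
    have := congrArg abs thq
    rwa [abs_mul, cabs _ cr2.2.1, one_mul, abs_of_nonneg ca0] at this)
  have Fp : 1/(κ:ℝ)^3 ≤ F x - F p := G.Flowk H hp1.le (by linarith) 2 (by
    rw [pow_two, mul_assoc, mul_assoc]; exact hpc)
  have Fq : 1/(κ:ℝ)^3 ≤ F q - F x := G.Flowk H (by linarith) hq1.le 2 (by
    rw [pow_two, mul_assoc, mul_assoc]; exact hqc)
  -- the function m
  have hkk : ε * ca ∈ Icc (-1:ℝ) 1 := by
    apply abs_le.1; rw [abs_mul, habsε, one_mul, abs_of_nonneg ca0]; exact ca1.le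
  obtain ⟨N, hN, hB⟩ := H.kern2 (ε*ca) hkk
  have hmono := H.mono (ε*ca) hkk (convex_Ioo z z') hne
  set m : ℝ → ℝ := fun l => (θ l - ε*ca) / d l with hm
  have mp : p ∈ Ioo z z' := ⟨zp, by linarith⟩
  have mq : q ∈ Ioo z z' := ⟨by linarith, qz⟩
  have mx : x ∈ Ioo z z' := ⟨m01, by linarith⟩
  have mbd : ∀ w, |θ w| ≤ 1 → D0 ≤ |d w| → |m w| ≤ 2 / D0 := by
    intro w h1 h2
    simp only [hm]
    rw [abs_div]
    have : |θ w - ε*ca| ≤ 2 := by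
      rw [abs_le] at h1 ⊢; constructor <;> linarith [hkk.1, hkk.2, h1.1, h1.2]
    gcongr
  have hmx : m x = 0 := by
    have : θ x = ε * ca := by rw [← ex]; linear_combination -(θ x) * hsq
    simp [hm, this]
  -- y
  have hcont : ContinuousOn (fun l => ε * θ l - ca + g0 * (ε * d l)) (Icc z x) :=
    (((continuous_const.mul H.ct).sub continuous_const).add
      (continuous_const.mul (continuous_const.mul H.cd))).continuousOn
  obtain ⟨y, hy, ey⟩ := intermediate_value_Ioo' m01.le hcont (show (0:ℝ) ∈ Ioo _ _ from by
    constructor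
    · have := mul_neg_of_pos_of_neg g0p (hneg x mx)
      rw [ex]; linarith
    · rw [H.tz hz, hz, ← hε]; have e5 : ε * ε = 1 := by rw [← pow_two]; exact hsq
      rw [e5, mul_zero, mul_zero, add_zero]; linarith)
  have my : y ∈ Ioo z z' := ⟨hy.1, hy.2.trans mx.2⟩
  have hmy : m y = -g0 := by
    simp only [hm]
    rw [div_eq_iff (hne y my)]
    simp only at ey
    linear_combination ε * ey + (-(θ y) - g0 * d y) * hsq
  -- gap
  have hgap : ∀ l ∈ Ioo y x, Gap d θ (κ/a*l) := by
    intro l hl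
    have ml : l ∈ Ioo z z' := ⟨hy.1.trans hl.1, hl.2.trans mx.2⟩
    have h1 : m y < m l := hmono my ml hl.1
    have h2 : m l < m x := hmono ml mx hl.2
    rw [hmy] at h1
    rw [hmx] at h2
    have hdl := hneg l ml
    set v := ε * θ l with hv
    set D := -(ε * d l) with hDd
    have D0 : 0 < D := by linarith
    have e1 : v - ca = -(m l) * D := by
      have : m l * d l = θ l - ε * ca := by simp only [hm]; field_simp [hne l ml]
      rw [hv, hDd]; linear_combination (-ε) * this + ca * hsq
    have v1 : ca < v := by
      have := mul_pos (neg_pos.2 h2) D0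
      linarith
    have v2 : v - ca ≤ g0 * D := by rw [e1]; gcongr; linarith
    have tl : θ l = ε * v := by rw [hv]; linear_combination -(θ l) * hsq
    have dl : d l = - (ε * D) := by rw [hDd]; linear_combination -(d l) * hsq
    have v3 : v ≤ 1 := by
      rcases H.R l (by linarith [ml.1]) with h | h
      · have : |v| ≤ 1 := by rw [hv, abs_mul, habsε, one_mul]; exact h
        exact (le_abs_self _).trans this
      · rw [tl, dl] at h
        have : ε * v * -(ε * D) = -(v * D) := by linear_combination -(v * D) * hsq
        rw [this] at h
        have : 0 < v * D := mul_pos (by linarith) D0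
        linarith
    obtain ⟨U0, hT⟩ := htr v v1 v3
    have hpar := par κ v ε hsq
    rw [← tl] at hpar
    set T := tK κ v
    set U := uK κ v
    have hkk2 : (ε^κ)^2 = 1 := by rw [← pow_mul, mul_comm, pow_mul, hsq, one_pow]
    have hdd : d (κ/a*l) = -(ε^κ * (U * D / a)) := by
      rw [H.hd, hpar.2, dl]; linear_combination (-(ε^κ * U * D / a)) * hsq
    have htt : θ (κ/a*l) = ε^κ * (T - C * (U * D)) := by
      rw [H.hth', hdd, hpar.1, ← hCdef]; field_simp; ring
    have hle : T - C * (U * D) ≤ -1 := by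
      have : L * (v - ca) * U ≤ L * (g0 * D) * U := by gcongr
      have e : L * (g0 * D) * U = C * (U * D) := by rw [hg0]; field_simp
      linarith
    have hab : |ε^κ| = 1 := by rw [abs_pow, habsε, one_pow]
    constructor
    · rw [htt, abs_mul, hab, one_mul, abs_of_neg (by linarith)]; linarith
    · rw [htt, hdd]
      have : ε ^ κ * (T - C * (U * D)) * -(ε ^ κ * (U * D / a)) = -(T - C * (U * D)) * (U * D / a) := by
        linear_combination (-(T - C * (U * D)) * (U * D / a)) * hkk2
      rw [this]
      apply mul_pos (by linarith)
      positivity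
  have Fyx : F x = F y := G.Fgap H (by linarith [hy.1]) hy.2.le (by
    intro l hl j
    have := (H.gap_iter (hgap l hl) j).ne
    rwa [← mul_assoc, ← pow_succ] at this)
  have k3 : 0 < 1/(κ:ℝ)^3 := by positivity
  have py : p < y := by
    by_contra h
    push Not at h
    have := G.Fmono H (by linarith [hy.1]) h
    linarith
  refine ⟨p, y, x, q, zp, py, hy.2, xq, qz, Fyx.symm, by linarith, Fq, ?_⟩
  -- distortion
  have hN' : ∀ l ∈ Ioo z z', 0 < N l ∧ ContinuousAt N l ∧ HasDerivAt m (N l) l := fun l hl => hN l (hne l hl)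
  have hB' : ∀ l1 ∈ Ioo z z', ∀ l2 ∈ Ioo z z', (m l2 - m l1)^2 ≤ (l2 - l1)^2 * (N l1 * N l2) :=
    fun l1 h1 l2 h2 => hB l1 l2 (hne l1 h1) (hne l2 h2)
  have hyx : 0 < x - y := by linarith [hy.2]
  have hin : ∀ {u v l : ℝ}, u ∈ Ioo z z' → v ∈ Ioo z z' → l ∈ Icc u v → l ∈ Ioo z z' :=
    fun h1 h2 h3 => ⟨h1.1.trans_le h3.1, h3.2.trans_lt h2.2⟩
  obtain ⟨ξ, hξ, eξ⟩ := exists_hasDerivAt_eq_slope m N hy.2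
    (fun l hl => (hN' l (hin my mx hl)).2.2.continuousAt.continuousWithinAt)
    (fun l hl => (hN' l (hin my mx ⟨hl.1.le, hl.2.le⟩)).2.2)
  rw [hmx, hmy, sub_neg_eq_add, zero_add] at eξ
  have mξ : ξ ∈ Ioo z z' := hin my mx ⟨hξ.1.le, hξ.2.le⟩
  have fin : ∀ t, 0 < t → N ξ * t ≤ 2 / D0 → g0 * D0 / 2 * t ≤ x - y := by
    intro t ht h
    rw [eξ, div_mul_eq_mul_div, div_le_div_iff₀ hyx hD0] at h
    linarith
  by_cases hcase : ∀ l ∈ Icc p y, N ξ ≤ N l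
  · left
    apply fin _ (by linarith)
    have := mvt_ge py (fun l hl => ⟨(hN' l (hin mp my hl)).2.2, hcase l hl⟩)
    have h2 := (abs_le.1 (mbd p tp dp)).1
    rw [hmy] at this
    linarith
  · right
    push Not at hcase
    obtain ⟨l1, hl1, n1⟩ := hcase
    apply fin _ (by linarith)
    have := mvt_ge xq (fun l hl => ⟨(hN' l (hin mx mq hl)).2.2, by
      by_contra n2
      push Not at n2
      exact no_bump hN' hB' (hin mp my hl1) (hin mx mq hl) (hl1.2.trans_lt hξ.1)
        (hξ.2.trans_le hl.1) n1 n2⟩) (M := N ξ)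
    have h2 := (abs_le.1 (mbd q tq dq)).2
    rw [hmx] at this
    linarith
end Cant

set_option linter.unusedSectionVars false
set_option linter.unusedVariables false
namespace Cant
open Set

variable {κ : ℕ} {a b : ℝ} {c d s θ F : ℝ → ℝ}

lemma FD.around (G : FD κ a s F) (H : Data κ a b c d s θ) {x' : ℝ} (hx' : 0 < x') (hF : 0 < F x')
    {l : ℝ} (hl : 0 < l) : ∃ z z', 0 ≤ z ∧ z ≤ l ∧ l < z' ∧ d z = 0 ∧ d z' = 0 ∧ c z' = - c z ∧
      ∀ l ∈ Ioo z z', c z * d l < 0 := by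
  have hk := H.kpos
  have c1 : IsCompact (Icc 0 l ∩ d ⁻¹' {0}) :=
    isCompact_Icc.inter_right (isClosed_singleton.preimage H.cd)
  obtain ⟨z, hz, hzm⟩ := c1.exists_isGreatest ⟨0, ⟨le_rfl, hl.le⟩, by simp [H.d0]⟩
  have hdz : d z = 0 := by simpa using hz.2
  have hex : ∃ w, l < w ∧ d w = 0 := by
    by_contra hcon
    push Not at hcon
    obtain ⟨j, hj⟩ := pow_unbounded_of_one_lt ((F l + 3) / F x') (by linarith : (1:ℝ) < κ)
    rw [div_lt_iff₀ hF, ← G.Fscalek H hx'.le j] at hj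
    set β := max l (((κ:ℝ)/a)^j * x')
    have h1 := G.Fmono H (mul_pos (pow_pos H.tau0 j) hx').le (le_max_right l (((κ:ℝ)/a)^j * x'))
    have h2 := G.Fle H hl.le (le_max_left l (((κ:ℝ)/a)^j * x')) (fun w hw => hcon w hw.1)
    linarith
  obtain ⟨w, hw, hdw⟩ := hex
  obtain ⟨z', g1, g2, g3, g4, g5⟩ := H.next hdz (hz.1.2.trans_lt hw) hdw
  refine ⟨z, z', hz.1.1, hz.1.2, ?_, hdz, g3, g4, g5⟩
  by_contra h
  push Not at h
  have := hzm (show z' ∈ _ from ⟨⟨by linarith [hz.1.1], h⟩, by simp [g3]⟩)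
  linarith

set_option maxHeartbeats 2000000 in
lemma FD.no_deriv (G : FD κ a s F) (H : Data κ a b c d s θ) {x ρ : ℝ} (hx : 0 < x) (hρ : 0 < ρ)
    (hd : HasDerivAt F ρ x) : False := by
  obtain ⟨γ, hγ, hporo⟩ := G.poro H
  have hk := H.kpos
  have hκ0 : (0:ℝ) < κ := by linarith
  set μ0 := 1/(κ:ℝ)^3 with hμ0
  have μp : 0 < μ0 := by positivity
  have hlin : ∀ η > 0, ∃ δ > 0, ∀ t, |t - x| < δ → |F t - F x - ρ * (t - x)| ≤ η * |t - x| := by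
    intro η hη
    have := (hasDerivAt_iff_isLittleO.1 hd).def hη
    obtain ⟨δ, hδ, h⟩ := Metric.eventually_nhds_iff.1 this
    refine ⟨δ, hδ, fun t ht => ?_⟩
    have := @h t (by rwa [Real.dist_eq])
    simpa [mul_comm] using this
  set η := min (ρ/4) (min (μ0*ρ/24) (γ*μ0*ρ/48)) with hη
  have η0 : 0 < η := by positivity
  have η1 : η ≤ ρ/4 := min_le_left _ _
  have η2 : η ≤ μ0*ρ/24 := (min_le_right _ _).trans (min_le_left _ _)
  have η3 : η ≤ γ*μ0*ρ/48 := (min_le_right _ _).trans (min_le_right _ _)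
  obtain ⟨δ', hδ', hδ⟩ := hlin η η0
  set δ := min δ' x / 2 with hδdef
  have δ0 : 0 < δ := by positivity
  have δ1 : δ < δ' := by have := min_le_left δ' x; linarith
  have δ2 : δ < x := by have := min_le_right δ' x; linarith
  have up : ρ * δ / 2 ≤ F (x+δ) - F x := by
    have := (abs_le.1 (hδ (x+δ) (by rw [add_sub_cancel_left, abs_of_pos δ0]; exact δ1))).1
    rw [add_sub_cancel_left, abs_of_pos δ0] at this
    nlinarith
  have dn : ρ * δ / 2 ≤ F x - F (x-δ) := by
    have e : x - δ - x = -δ := by ring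
    have := (abs_le.1 (hδ (x-δ) (by rw [e, abs_neg, abs_of_pos δ0]; exact δ1))).2
    rw [e, abs_neg, abs_of_pos δ0] at this
    nlinarith
  have Fx0 : 0 ≤ F x := by rw [← G.F0]; exact G.Fmono H le_rfl hx.le
  have hF' : 0 < F (x+δ) := by
    have : 0 < ρ * δ / 2 := by positivity
    linarith
  obtain ⟨k, hk'⟩ := pow_unbounded_of_one_lt (3 / (ρ * δ / 2)) (by linarith : (1:ℝ) < κ)
  have hkk : 0 < (κ:ℝ)^k := by positivity
  rw [div_lt_iff₀ (by positivity)] at hk'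
  set τ := ((κ:ℝ)/a)^k with hτ
  have τ0 : 0 < τ := pow_pos H.tau0 k
  obtain ⟨z, z', z0, zx, xz', dz, dz', ccz, hneg⟩ := G.around H (by linarith : 0 < x + δ) hF' (mul_pos τ0 hx)
  obtain ⟨p, y, u, q, zp, py, yu, uq, qz, Fyu, Fp, Fq, hor⟩ := hporo z z' z0 (zx.trans_lt xz') dz dz' ccz hneg
  have F3 := G.Fle H z0 (zx.trans xz'.le) (fun l hl h => by
    have := hneg l hl; rw [h] at this; simp at this)
  have sc : ∀ t, 0 ≤ t → F t = (κ:ℝ)^k * F (t/τ) := by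
    intro t ht
    rw [← G.Fscalek H (div_nonneg ht τ0.le) k, ← hτ, mul_div_cancel₀ _ τ0.ne']
  rw [sc z z0, sc z' (by linarith)] at F3
  rw [sc y (by linarith), sc u (by linarith)] at Fyu
  rw [sc y (by linarith), sc p (by linarith)] at Fp
  rw [sc u (by linarith), sc q (by linarith)] at Fq
  set Z := z/τ with hZ
  set Z' := z'/τ with hZ'
  set P := p/τ with hP
  set Y := y/τ with hY
  set W := u/τ with hW
  set Q := q/τ with hQ
  have ZP : Z < P := div_lt_div_of_pos_right zp τ0
  have PY : P < Y := div_lt_div_of_pos_right py τ0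
  have YW : Y < W := div_lt_div_of_pos_right yu τ0
  have WQ : W < Q := div_lt_div_of_pos_right uq τ0
  have QZ : Q < Z' := div_lt_div_of_pos_right qz τ0
  have Z0 : 0 ≤ Z := div_nonneg z0 τ0.le
  have Zx : Z ≤ x := by rw [hZ, div_le_iff₀ τ0]; linarith
  have xZ' : x < Z' := by rw [hZ', lt_div_iff₀ τ0]; linarith
  have hor' : γ * (Y - P) ≤ W - Y ∨ γ * (Q - W) ≤ W - Y := by
    rcases hor with h | h
    · left
      rw [hY, hP, hW, ← sub_div, ← sub_div, ← mul_div_assoc]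
      exact div_le_div_of_nonneg_right h τ0.le
    · right
      rw [hY, hQ, hW, ← sub_div, ← sub_div, ← mul_div_assoc]
      exact div_le_div_of_nonneg_right h τ0.le
  clear_value Z Z' P Y W Q
  set M := 1/(κ:ℝ)^k with hM
  have M0 : 0 < M := by positivity
  have hKM : (κ:ℝ)^k * M = 1 := by rw [hM]; field_simp
  have conv : ∀ r f : ℝ, r ≤ (κ:ℝ)^k * f → r * M ≤ f := by
    intro r f h
    have := mul_le_mul_of_nonneg_right h M0.le
    calc r * M ≤ _ := this
      _ = (κ:ℝ)^k * M * f := by ring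
      _ = f := by rw [hKM, one_mul]
  have F3' : F Z' - F Z ≤ 3 * M := by
    have := conv (-3) (-(F Z' - F Z)) (by linarith)
    linarith
  have FYW : F Y = F W := mul_left_cancel₀ hkk.ne' Fyu
  have FP := conv μ0 (F Y - F P) (by linarith)
  have FQ := conv μ0 (F Q - F W) (by linarith)
  have hM3 : 3 * M < ρ * δ / 2 := by
    have h3 := mul_lt_mul_of_pos_right hk' M0
    have e : (κ:ℝ)^k * (ρ * δ / 2) * M = ρ * δ / 2 := by linear_combination (ρ * δ / 2) * hKM
    linarith
  have mZ : F Z ≤ F x := G.Fmono H Z0 Zx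
  have mZ' : F x ≤ F Z' := G.Fmono H hx.le xZ'.le
  have Zlow : x - δ < Z := by
    by_contra h
    push Not at h
    have := G.Fmono H Z0 h
    linarith
  have Zup : Z' < x + δ := by
    by_contra h
    push Not at h
    have := G.Fmono H (by linarith) h
    linarith
  set ℓ := Z' - Z with hℓ
  have hest : ∀ t, Z ≤ t → t ≤ Z' → |F t - F x - ρ * (t - x)| ≤ η * ℓ := by
    intro t h1 h2
    refine (hδ t (by rw [abs_lt]; constructor <;> linarith)).trans ?_
    apply mul_le_mul_of_nonneg_left _ η0.le
    rw [abs_le]; constructor <;> linarith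
  have ez := abs_le.1 (hest Z le_rfl (by linarith))
  have ez' := abs_le.1 (hest Z' (by linarith) le_rfl)
  have ep := abs_le.1 (hest P (by linarith) (by linarith))
  have ey := abs_le.1 (hest Y (by linarith) (by linarith))
  have ew := abs_le.1 (hest W (by linarith) (by linarith))
  have eq := abs_le.1 (hest Q (by linarith) (by linarith))
  have ℓ0 : 0 < ℓ := by linarith
  have hℓM : ρ * ℓ ≤ 6 * M := by
    have e : ρ * ℓ = ρ * (Z' - x) - ρ * (Z - x) := by rw [hℓ]; ring
    have e2 : ρ * ℓ - 2 * (η * ℓ) ≤ 3 * M := by linarith [ez.1, ez.2, ez'.1, ez'.2]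
    have e3 : η * ℓ ≤ ρ/4*ℓ := mul_le_mul_of_nonneg_right η1 ℓ0.le
    linarith
  have g1 : ρ * (W - Y) ≤ 2 * (η * ℓ) := by
    have e : ρ * (W - Y) = ρ * (W - x) - ρ * (Y - x) := by ring
    linarith [ey.1, ey.2, ew.1, ew.2]
  have b1 : η * ℓ ≤ μ0 * M / 4 := by
    have h1 : η * ℓ ≤ μ0*ρ/24 * ℓ := mul_le_mul_of_nonneg_right η2 ℓ0.le
    have h2 := mul_le_mul_of_nonneg_left hℓM (by positivity : 0 ≤ μ0/24)
    have e : μ0*ρ/24 * ℓ = μ0/24*(ρ*ℓ) := by ring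
    linarith
  have b2 : η * ℓ ≤ γ * μ0 * M / 8 := by
    have h1 : η * ℓ ≤ γ*μ0*ρ/48 * ℓ := mul_le_mul_of_nonneg_right η3 ℓ0.le
    have h2 := mul_le_mul_of_nonneg_left hℓM (by positivity : 0 ≤ γ*μ0/48)
    have e : γ*μ0*ρ/48 * ℓ = γ*μ0/48*(ρ*ℓ) := by ring
    have e' : γ*μ0/48*(6*M) = γ * μ0 * M / 8 := by ring
    linarith
  have g2 : μ0 * M / 2 ≤ ρ * (Y - P) := by
    have e : ρ * (Y - P) = ρ * (Y - x) - ρ * (P - x) := by ring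
    linarith [ey.1, ey.2, ep.1, ep.2]
  have g3 : μ0 * M / 2 ≤ ρ * (Q - W) := by
    have e : ρ * (Q - W) = ρ * (Q - x) - ρ * (W - x) := by ring
    linarith [eq.1, eq.2, ew.1, ew.2]
  have pos : 0 < γ * μ0 * M := by positivity
  have e0 : γ * (μ0 * M / 2) = γ * μ0 * M / 2 := by ring
  rcases hor' with h | h
  · have h1 := mul_le_mul_of_nonneg_left h hρ.le
    have h2 := mul_le_mul_of_nonneg_left g2 hγ.le
    have e : ρ * (γ * (Y - P)) = γ * (ρ * (Y - P)) := by ring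
    linarith
  · have h1 := mul_le_mul_of_nonneg_left h hρ.le
    have h2 := mul_le_mul_of_nonneg_left g3 hγ.le
    have e : ρ * (γ * (Q - W)) = γ * (ρ * (Q - W)) := by ring
    linarith
end Cant

theorem asymptotic_coefficient_singular (κ : ℕ) (a b : ℝ) (hκ : 2 ≤ κ)
    (ha : 0 < a) (ha' : a < 1 / κ) (hb : b = (1 - κ * a) / (κ - 1))
    (D ν : ℝ) (hD : D = Real.log κ / Real.log (κ / a)) (hν : ν = Real.log (κ / a))
    (P : ℝ → ℝ) (hP : CantorType κ a b P) (hPmono : MonotoneOn P (Set.Icc 0 1))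
    (μ : Measure ℝ)
    (hμ : ∀ x ∈ Set.Icc (0 : ℝ) 1, μ (Set.Icc 0 x) = ENNReal.ofReal (P x))
    (hμc : μ (Set.Icc (0 : ℝ) 1)ᶜ = 0)
    (hfin : ∀ Λ : ℝ, 0 < Λ → ({l : ℝ | IsDirichletEigen μ l} ∩ Set.Ioc 0 Λ).Finite)
    (s : ℝ → ℝ) (hs : Continuous s) (hper : Function.Periodic s ν)
    (hasymp : Filter.Tendsto
      (fun Λ : ℝ => (({l : ℝ | IsDirichletEigen μ l} ∩ Set.Ioc 0 Λ).ncard : ℝ) / Λ ^ D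
        - s (Real.log Λ))
      Filter.atTop (nhds 0)) :
    ∃ σ : ℝ → ℝ, ∃ hσ : Monotone σ,
      (hσ.stieltjesFunction.measure.restrict (Set.Icc 0 ν)).MutuallySingular
        (volume.restrict (Set.Icc 0 ν)) ∧
      ∀ t ∈ Set.Icc (0 : ℝ) ν, s t = Real.exp (-D * t) * σ t := by
  obtain ⟨c, d, sd, θ, H, hiff⟩ := Cant.setup κ a b hκ ha ha' hb P hP hPmono μ hμ hμc
  have hk := H.kpos
  have hκ0 : (0:ℝ) < κ := by linarith
  have htau := H.tau
  have htau0 := H.tau0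
  have hν0 : 0 < ν := by rw [hν]; exact Real.log_pos htau
  have hD0 : 0 < D := by
    rw [hD]; exact div_pos (Real.log_pos (by linarith)) (Real.log_pos htau)
  have hDν : Real.log ((κ:ℝ)/a) * D = Real.log κ := by
    rw [hD]; rw [hν] at hν0; field_simp
  have htD : ((κ:ℝ)/a) ^ D = κ := by
    rw [Real.rpow_def_of_pos htau0, hDν, Real.exp_log hκ0]
  have hset : ∀ Λ, {l : ℝ | 0 < l ∧ sd l = 0} ∩ Set.Ioc 0 Λ
      = {l : ℝ | IsDirichletEigen μ l} ∩ Set.Ioc 0 Λ := by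
    intro Λ
    ext l
    constructor
    · rintro ⟨⟨h1, h2⟩, h3⟩
      exact ⟨(hiff l h1).2 h2, h3⟩
    · rintro ⟨h1, h3⟩
      exact ⟨⟨h3.1, (hiff l h3.1).1 h1⟩, h3⟩
  have G : Cant.FD κ a sd (fun l => l ^ D * s (Real.log l)) := by
    constructor
    · intro α β
      refine ((hfin (max β 1) (by positivity)).subset ?_)
      rintro l ⟨⟨h1, h2⟩, h3⟩
      exact ⟨(hiff l h1).2 h2, h1, h3.2.trans (le_max_left _ _)⟩
    · intro l hl
      rcases hl.eq_or_lt with rfl | hl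
      · have : ∀ k : ℕ, ((Cant.nn sd 0 (((κ:ℝ)/a)^k*0) : ℝ)/(κ:ℝ)^k) = 0 := by
          intro k
          simp [Cant.nn]
        simp only [this, Real.zero_rpow hD0.ne', zero_mul]
        exact tendsto_const_nhds
      · have t1 : Filter.Tendsto (fun k : ℕ => ((κ:ℝ)/a)^k*l) Filter.atTop Filter.atTop :=
          (tendsto_pow_atTop_atTop_of_one_lt htau).atTop_mul_const hl
        have t2 := hasymp.comp t1
        have t3 := ((t2.add_const (s (Real.log l))).const_mul (l ^ D))
        rw [zero_add] at t3
        refine t3.congr (fun k => ?_)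
        have e1 : Real.log (((κ:ℝ)/a)^k*l) = Real.log l + k * ν := by
          rw [Real.log_mul (pow_pos htau0 k).ne' hl.ne', Real.log_pow, hν]; ring
        have e2 : (((κ:ℝ)/a)^k*l) ^ D = (κ:ℝ)^k * l ^ D := by
          rw [Real.mul_rpow (pow_pos htau0 k).le hl.le, ← Real.rpow_natCast, ← Real.rpow_mul htau0.le,
            mul_comm (k:ℝ) D, Real.rpow_mul htau0.le, htD, Real.rpow_natCast]
        have hlD : 0 < l ^ D := Real.rpow_pos_of_pos hl D
        have e3 : s (Real.log l + k * ν) = s (Real.log l) := hper.nat_mul k _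
        simp only [Function.comp, e1, e2, e3, Cant.nn, hset]
        have hkk : 0 < (κ:ℝ)^k := by positivity
        field_simp
        ring
  have hσF : ∀ t, Real.exp (D * t) * s t = (fun l => l ^ D * s (Real.log l)) (Real.exp t) := by
    intro t
    simp only [Real.log_exp]
    rw [← Real.exp_mul, mul_comm t D]
  have hσ : Monotone (fun t => Real.exp (D * t) * s t) := by
    intro t u htu
    have h := G.Fmono H (Real.exp_pos t).le (Real.exp_le_exp.2 htu)
    exact (hσF t).trans_le (h.trans_eq (hσF u).symm)
  refine ⟨_, hσ, ?_, ?_⟩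
  · have hz : hσ.stieltjesFunction.measure.rnDeriv volume =ᵐ[volume] 0 := by
      filter_upwards [hσ.ae_hasDerivAt,
        Measure.rnDeriv_lt_top hσ.stieltjesFunction.measure volume] with x hx hlt
      by_contra hne
      have hpos : 0 < (hσ.stieltjesFunction.measure.rnDeriv volume x).toReal :=
        ENNReal.toReal_pos hne hlt.ne
      have hx0 := Real.exp_pos x
      have hx' := hx
      rw [← Real.log_exp x] at hx'
      have hc := HasDerivAt.comp (Real.exp x) hx' (Real.hasDerivAt_log hx0.ne')
      rw [Real.log_exp] at hc
      refine G.no_deriv H hx0 (mul_pos hpos (inv_pos.2 hx0)) (hc.congr_of_eventuallyEq ?_)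
      filter_upwards [eventually_gt_nhds hx0] with y hy
      have := hσF (Real.log y)
      rw [Real.exp_log hy] at this
      exact this.symm
    exact ((Measure.rnDeriv_eq_zero _ _).1 hz).mono Measure.restrict_le_self Measure.restrict_le_self
  · intro t _
    rw [← mul_assoc, ← Real.exp_add]
    simp
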